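/- arXiv:1206.3021 — 7 statements merged into one kernel-verified Lean document; each statement's English description precedes it below -/
import Mathlib

section
/- Let K be a commutative field and let V be a 2-dimensional K-vector space equipped with a commutative and associative K-bilinear multiplication × such that every element of V is the product of two elements of V. Then V has a multiplicative identity element, and V is isomorphic as a K-algebra to one of: a quadratic field extension of K, the ring of dual numbers K[ε]/(ε²) over K, or the direct product K × K. -/
/-!
Adjoin an identity to `V`: in the unitization `K ⊕ V`, the ideal `V` is finitely generated and
equal to its own square, so by Nakayama some `e ∈ V` acts on it as the identity.

Being Artinian, `V` is a field, or contains a nonzero `v` with `v² = 0`, or contains an idempotent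
`e ≠ 0, 1`. In the last two cases `ε ↦ v` and `(a, b) ↦ a e + b (1 - e)` embed `K[ε]/(ε²)` and
`K × K` respectively into `V`, and for `dim V = 2` these embeddings are isomorphisms.
-/

open Function
open scoped DualNumber

section Identity

variable {R A : Type*} [CommRing R] [NonUnitalRing A] [Module R A] [IsScalarTower R A A]
  [SMulCommClass R A A]

theorem mem_ker_fstHom_iff {x : Unitization R A} :
    x ∈ RingHom.ker (Unitization.fstHom R A) ↔ ∃ a : A, (a : Unitization R A) = x :=
  ⟨fun hx ↦ ⟨x.snd, Unitization.ext (RingHom.mem_ker.1 hx).symm rfl⟩,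
    by rintro ⟨a, rfl⟩; exact Unitization.fst_inr R a⟩

variable (R A) in
theorem ker_fstHom_fg [Module.Finite R A] : (RingHom.ker (Unitization.fstHom R A)).FG := by
  refine Submodule.FG.of_restrictScalars R ?_
  have hrange : (RingHom.ker (Unitization.fstHom R A)).restrictScalars R =
      LinearMap.range (Unitization.inrHom R R A) :=
    Submodule.ext fun _ ↦ mem_ker_fstHom_iff
  rw [hrange, LinearMap.range_eq_map]
  exact Module.Finite.fg_top.map _

theorem ker_fstHom_le_mul_self
    (hspan : Submodule.span R (Set.range fun p : A × A ↦ p.1 * p.2) = ⊤) :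
    RingHom.ker (Unitization.fstHom R A) ≤
      RingHom.ker (Unitization.fstHom R A) * RingHom.ker (Unitization.fstHom R A) := by
  set I := RingHom.ker (Unitization.fstHom R A)
  have hle : Submodule.span R (Set.range fun p : A × A ↦ p.1 * p.2) ≤
      ((I * I).restrictScalars R).comap (Unitization.inrHom R R A) := by
    rw [Submodule.span_le]
    rintro _ ⟨⟨a, b⟩, rfl⟩
    change ((a * b : A) : Unitization R A) ∈ I * I
    rw [Unitization.inr_mul]
    exact Ideal.mul_mem_mul (mem_ker_fstHom_iff.2 ⟨a, rfl⟩) (mem_ker_fstHom_iff.2 ⟨b, rfl⟩)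
  intro x hx
  obtain ⟨a, rfl⟩ := mem_ker_fstHom_iff.1 hx
  exact hle (hspan ▸ Submodule.mem_top)

theorem exists_forall_mul_eq_self_of_span_mul_eq_top {R A : Type*} [CommRing R]
    [NonUnitalCommRing A] [Module R A] [IsScalarTower R A A] [SMulCommClass R A A]
    [Module.Finite R A]
    (hspan : Submodule.span R (Set.range fun p : A × A ↦ p.1 * p.2) = ⊤) :
    ∃ e : A, ∀ a : A, e * a = a := by
  obtain ⟨r, hr, hr_smul⟩ := Submodule.exists_mem_and_smul_eq_self_of_fg_of_le_smul _ _
    (ker_fstHom_fg R A) (ker_fstHom_le_mul_self hspan)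
  obtain ⟨e, rfl⟩ := mem_ker_fstHom_iff.1 hr
  refine ⟨e, fun a ↦ Unitization.inr_injective (R := R) ?_⟩
  rw [Unitization.inr_mul]
  exact hr_smul a (mem_ker_fstHom_iff.2 ⟨a, rfl⟩)

end Identity

section Artinian

variable {R : Type*} [CommRing R] [IsArtinianRing R]

theorem exists_mul_mul_eq_self_of_isReduced [IsReduced R] (x : R) : ∃ y, x * (x * y) = x := by
  obtain ⟨n, y, hy⟩ := IsArtinian.exists_pow_succ_smul_dvd x (1 : R)
  have hpow : (x * (x * y - 1)) ^ (n + 1) = 0 := by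
    have hzero : x ^ n * (x * y - 1) = 0 := by
      rw [smul_eq_mul, smul_eq_mul, pow_succ] at hy
      linear_combination hy
    calc (x * (x * y - 1)) ^ (n + 1)
        = x ^ n * (x * y - 1) * (x * (x * y - 1) ^ n) := by rw [mul_pow, pow_succ]; ring
      _ = 0 := by rw [hzero, zero_mul]
  exact ⟨y, by linear_combination eq_zero_of_pow_eq_zero hpow⟩

theorem isField_or_exists_isIdempotentElem_of_isReduced [IsReduced R] [Nontrivial R] :
    IsField R ∨ ∃ e : R, IsIdempotentElem e ∧ e ≠ 0 ∧ e ≠ 1 := by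
  by_contra! ⟨hfield, hidem⟩
  refine hfield ⟨exists_pair_ne R, mul_comm, fun {x} hx ↦ ?_⟩
  obtain ⟨y, hy⟩ := exists_mul_mul_eq_self_of_isReduced x
  have he : IsIdempotentElem (x * y) := by
    rw [IsIdempotentElem]
    linear_combination y * hy
  refine ⟨y, hidem _ he fun hxy ↦ hx ?_⟩
  rw [← hy, hxy, mul_zero]

variable (R) in
theorem isField_or_exists_sq_eq_zero_or_exists_isIdempotentElem [Nontrivial R] :
    IsField R ∨ (∃ x : R, x ≠ 0 ∧ x ^ 2 = 0) ∨ ∃ e : R, IsIdempotentElem e ∧ e ≠ 0 ∧ e ≠ 1 := by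
  by_cases hred : IsReduced R
  · exact isField_or_exists_isIdempotentElem_of_isReduced.imp_right Or.inr
  · rw [isReduced_iff_pow_one_lt 2 one_lt_two] at hred
    push Not at hred
    obtain ⟨x, hx_sq, hx⟩ := hred
    exact .inr (.inl ⟨x, hx, hx_sq⟩)

end Artinian

section Embeddings

variable {R A : Type*} [CommRing R] [Ring A] [Algebra R A]

/-- The algebra homomorphism `R × R → A`, `(a, b) ↦ a e + b (1 - e)`, attached to an idempotent
`e` of `A`. When injective it identifies a subalgebra of `A` with the split algebra `R × R`. -/
def prodAlgHomOfIsIdempotentElem {e : A} (he : IsIdempotentElem e) : R × R →ₐ[R] A :=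
  AlgHom.ofLinearMap
    ((LinearMap.toSpanSingleton R A e).coprod (LinearMap.toSpanSingleton R A (1 - e)))
    (by simp)
    (fun x y ↦ by
      simp [add_mul, mul_add, smul_smul, mul_comm, he.eq, he.one_sub.eq, he.mul_one_sub_self,
        he.one_sub_mul_self])

theorem prodAlgHomOfIsIdempotentElem_apply {e : A} (he : IsIdempotentElem e) (x : R × R) :
    prodAlgHomOfIsIdempotentElem he x = x.1 • e + x.2 • (1 - e) := by
  simp [prodAlgHomOfIsIdempotentElem]

variable [IsDomain R] [Module.IsTorsionFree R A]

theorem injective_of_map_eps_ne_zero (f : R[ε] →ₐ[R] A) (hf : f ε ≠ 0) : Injective f := by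
  refine (injective_iff_map_eq_zero f).2 fun x hx ↦ ?_
  have hfst : x.fst = 0 := by
    have hmul : x * ε = x.fst • ε := by ext <;> simp
    rw [← smul_eq_zero_iff_left hf, ← map_smul, ← hmul, map_mul, hx, zero_mul]
  have hx_eps : x = x.snd • ε := by ext <;> simp [hfst]
  rw [hx_eps, map_smul] at hx
  exact TrivSqZeroExt.ext hfst ((smul_eq_zero_iff_left hf).1 hx)

theorem injective_of_map_one_zero_ne_zero_of_map_zero_one_ne_zero (f : R × R →ₐ[R] A)
    (hfst : f (1, 0) ≠ 0) (hsnd : f (0, 1) ≠ 0) : Injective f := by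
  refine (injective_iff_map_eq_zero f).2 fun x hx ↦
    Prod.ext (?_ : x.1 = 0) (?_ : x.2 = 0)
  · rw [← smul_eq_zero_iff_left hfst, ← map_smul]
    calc f (x.1 • (1, 0)) = f (x * (1, 0)) := by congr 1; ext <;> simp
      _ = 0 := by rw [map_mul, hx, zero_mul]
  · rw [← smul_eq_zero_iff_left hsnd, ← map_smul]
    calc f (x.2 • (0, 1)) = f (x * (0, 1)) := by congr 1; ext <;> simp
      _ = 0 := by rw [map_mul, hx, zero_mul]

end Embeddings

section FinrankTwo

variable {K A : Type*} [Field K]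

theorem nonempty_algEquiv_of_injective_of_finrank_eq {B : Type*} [Ring A] [Algebra K A] [Ring B]
    [Algebra K B] [FiniteDimensional K A] [FiniteDimensional K B] (f : A →ₐ[K] B)
    (hf : Injective f) (h : Module.finrank K A = Module.finrank K B) : Nonempty (B ≃ₐ[K] A) :=
  have hsurj : Surjective f :=
    (LinearMap.injective_iff_surjective_of_finrank_eq_finrank (f := f.toLinearMap) h).1 hf
  ⟨(AlgEquiv.ofBijective f ⟨hf, hsurj⟩).symm⟩

variable (K) in
theorem finrank_dualNumber : Module.finrank K K[ε] = 2 :=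
  (Module.finrank_prod (R := K) (M := K) (M' := K)).trans (by simp)

instance : FiniteDimensional K K[ε] := Module.finite_of_finrank_pos (by simp [finrank_dualNumber])

theorem nonempty_algEquiv_dualNumber [Ring A] [Algebra K A] (hdim : Module.finrank K A = 2)
    {x : A} (hx : x ≠ 0) (hx_sq : x ^ 2 = 0) : Nonempty (A ≃ₐ[K] K[ε]) := by
  have : FiniteDimensional K A := Module.finite_of_finrank_pos (by simp [hdim])
  let f : K[ε] →ₐ[K] A := DualNumber.lift
    ⟨(Algebra.ofId K A, x), by simp [← pow_two, hx_sq], fun r ↦ (Algebra.commutes r x).symm⟩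
  have hf : f ε ≠ 0 := by simpa [f] using hx
  exact nonempty_algEquiv_of_injective_of_finrank_eq f (injective_of_map_eps_ne_zero f hf)
    ((finrank_dualNumber K).trans hdim.symm)

theorem nonempty_algEquiv_prod [Ring A] [Algebra K A] (hdim : Module.finrank K A = 2)
    {e : A} (he : IsIdempotentElem e) (he0 : e ≠ 0) (he1 : e ≠ 1) :
    Nonempty (A ≃ₐ[K] K × K) := by
  have : FiniteDimensional K A := Module.finite_of_finrank_pos (by simp [hdim])
  refine nonempty_algEquiv_of_injective_of_finrank_eq (prodAlgHomOfIsIdempotentElem he)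
    (injective_of_map_one_zero_ne_zero_of_map_zero_one_ne_zero _ ?_ ?_) (by simp [hdim])
  · simpa [prodAlgHomOfIsIdempotentElem_apply] using he0
  · simpa [prodAlgHomOfIsIdempotentElem_apply, sub_eq_zero] using he1.symm

theorem isField_or_algEquiv_dualNumber_or_algEquiv_prod [CommRing A] [Algebra K A]
    (hdim : Module.finrank K A = 2) :
    IsField A ∨ Nonempty (A ≃ₐ[K] K[ε]) ∨ Nonempty (A ≃ₐ[K] K × K) := by
  have : FiniteDimensional K A := Module.finite_of_finrank_pos (by simp [hdim])
  have : IsArtinianRing A := IsArtinianRing.of_finite K A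
  have : Nontrivial A := Module.nontrivial_of_finrank_pos (R := K) (by simp [hdim])
  obtain hfield | ⟨x, hx, hx_sq⟩ | ⟨e, he, he0, he1⟩ :=
    isField_or_exists_sq_eq_zero_or_exists_isIdempotentElem A
  · exact .inl hfield
  · exact .inr (.inl (nonempty_algEquiv_dualNumber hdim hx hx_sq))
  · exact .inr (.inr (nonempty_algEquiv_prod hdim he he0 he1))

end FinrankTwo

section UnbundledMultiplication

theorem isLinearMap_of_map_smul_add {R M N : Type*} [Semiring R] [AddCommMonoid M] [Module R M]
    [AddCommGroup N] [Module R N] {f : M → N}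
    (h : ∀ (r : R) (x y : M), f (r • x + y) = r • f x + f y) : IsLinearMap R f := by
  have hadd (x y : M) : f (x + y) = f x + f y := by simpa using h 1 x y
  have hzero : f 0 = 0 := by simpa using hadd 0 0
  exact ⟨hadd, fun r x ↦ by simpa [hzero] using h r x 0⟩

/-- The ring structure, possibly without identity, given by a commutative, associative, additive
multiplication on an additive group. It is reducible so that the additive structure it carries
unifies with the given one. -/
abbrev nonUnitalCommRingOfMul {V : Type*} [AddCommGroup V] (mul : V → V → V)
    (hcomm : ∀ a b : V, mul a b = mul b a)
    (hassoc : ∀ a b c : V, mul (mul a b) c = mul a (mul b c))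
    (hadd : ∀ a b c : V, mul (a + b) c = mul a c + mul b c) : NonUnitalCommRing V :=
  have hzero (a : V) : mul 0 a = 0 := by simpa using hadd 0 0 a
  { (inferInstance : AddCommGroup V) with
    mul := mul
    mul_assoc := hassoc
    mul_comm := hcomm
    left_distrib := fun a b c ↦ (hcomm _ _).trans <| (hadd b c a).trans <|
      congrArg₂ (· + ·) (hcomm b a) (hcomm c a)
    right_distrib := hadd
    zero_mul := hzero
    mul_zero := fun a ↦ (hcomm a 0).trans (hzero a) }

theorem stmt0_general {K V : Type*} [Field K] [AddCommGroup V] [Module K V]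
    (mul : V → V → V)
    (hcomm : ∀ a b : V, mul a b = mul b a)
    (hassoc : ∀ a b c : V, mul (mul a b) c = mul a (mul b c))
    (hbilin : ∀ (r : K) (u v w : V), mul (r • v + w) u = r • mul v u + mul w u)
    (hdim : Module.finrank K V = 2)
    (hspan : Submodule.span K (Set.range fun p : V × V ↦ mul p.1 p.2) = ⊤) :
    ∃ e : V, (∀ v : V, mul e v = v) ∧
      ((∀ v : V, v ≠ 0 → ∃ w : V, mul v w = e) ∨
       (∃ φ : V ≃ₗ[K] DualNumber K, ∀ a b : V, φ (mul a b) = φ a * φ b) ∨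
       (∃ φ : V ≃ₗ[K] (K × K), ∀ a b : V, φ (mul a b) = φ a * φ b)) := by
  have hlin (u : V) : IsLinearMap K (mul · u) := isLinearMap_of_map_smul_add (hbilin · u)
  let := nonUnitalCommRingOfMul mul hcomm hassoc fun a b c ↦ (hlin c).map_add a b
  have hsmul_mul (r : K) (a b : V) : r • a * b = r • (a * b) := (hlin b).map_smul r a
  have hmul_smul (r : K) (a b : V) : a * r • b = r • (a * b) := by
    rw [mul_comm, hsmul_mul, mul_comm]
  have : IsScalarTower K V V := ⟨hsmul_mul⟩
  have : SMulCommClass K V V := ⟨fun r a b ↦ (hmul_smul r a b).symm⟩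
  have : Module.Finite K V := Module.finite_of_finrank_pos (by simp [hdim])
  obtain ⟨e, he⟩ := exists_forall_mul_eq_self_of_span_mul_eq_top hspan
  let : CommRing V :=
    { (inferInstance : NonUnitalCommRing V) with
      one := e, one_mul := he, mul_one := fun a ↦ (mul_comm a e).trans (he a) }
  let : Algebra K V := Algebra.ofModule hsmul_mul hmul_smul
  refine ⟨e, he, ?_⟩
  obtain hfield | ⟨⟨φ⟩⟩ | ⟨⟨φ⟩⟩ := isField_or_algEquiv_dualNumber_or_algEquiv_prod hdim
  · exact .inl fun v hv ↦ hfield.mul_inv_cancel hv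
  · exact .inr (.inl ⟨φ.toLinearEquiv, map_mul φ⟩)
  · exact .inr (.inr ⟨φ.toLinearEquiv, map_mul φ⟩)

end UnbundledMultiplication

/-- Let `K` be a commutative field and `V` a 2-dimensional `K`-vector space
with a commutative, associative, `K`-bilinear multiplication `mul` such that every element of
`V` is a product of two elements.  Then `V` has a multiplicative identity and, with this
multiplication, `V` is isomorphic as a `K`-algebra to a quadratic field extension of `K`
(equivalently, `(V, mul)` is itself a field), to the dual numbers `K[ε]/(ε²)`, or to `K × K`. -/
theorem stmt0 (K : Type) [Field K] (V : Type) [AddCommGroup V] [Module K V]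
    (mul : V → V → V)
    (hcomm : ∀ a b : V, mul a b = mul b a)
    (hassoc : ∀ a b c : V, mul (mul a b) c = mul a (mul b c))
    (hbilin : ∀ (r : K) (u v w : V), mul (r • v + w) u = r • mul v u + mul w u)
    (hdim : Module.finrank K V = 2)
    (hprod : ∀ v : V, ∃ a b : V, v = mul a b) :
    ∃ e : V, (∀ v : V, mul e v = v) ∧
      ((∀ v : V, v ≠ 0 → ∃ w : V, mul v w = e) ∨
       (∃ φ : V ≃ₗ[K] DualNumber K, ∀ a b : V, φ (mul a b) = φ a * φ b) ∨
       (∃ φ : V ≃ₗ[K] (K × K), ∀ a b : V, φ (mul a b) = φ a * φ b)) :=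
  stmt0_general mul hcomm hassoc hbilin hdim <| eq_top_iff.2 fun v _ ↦
    let ⟨a, b, hv⟩ := hprod v; Submodule.subset_span ⟨(a, b), hv.symm⟩
end

section
/- Let K be a commutative field and let V be a 2-dimensional K-vector space equipped with a commutative and associative K-bilinear multiplication × such that every element of V is the product of two elements of V, and let 1 denote its multiplicative identity (which exists). Then there exists a unique K-linear bijection σ : V → V with σ ∘ σ = id and σ(1) = 1 such that for every v ∈ V both v + σ(v) and v × σ(v) lie in K·1. -/
/-! The conjugation is forced to be `v ↦ tr v • 1 - v`. In a basis, multiplication by `v` is a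
`2 × 2` matrix `M`, and `tr M • 1 - M` is its adjugate, so `v * (tr v • 1 - v) = det M • 1`.
Conversely, if `v + σ v = k • 1` and `v * σ v = m • 1`, then `v * v = k • v - m • 1`; comparing
with `v * v = tr v • v - N v • 1` for the second vector `v` of a basis starting with `1` gives
`k = tr v`. Over a commutative ring `1` still belongs to a basis: if `1 = p • b₀ + q • b₁`, then
the `b₀`-coordinate of `1 * b₀ = b₀` exhibits `p` and `q` as coprime. -/

section Basis

variable {R M A : Type*} [CommRing R] [AddCommGroup M] [Module R M] [Ring A] [Algebra R A]

theorem exists_basis_zero_eq_of_isCoprime_repr (b : Module.Basis (Fin 2) R M) {v : M}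
    (hv : IsCoprime (b.repr v 0) (b.repr v 1)) :
    ∃ b' : Module.Basis (Fin 2) R M, b' 0 = v := by
  obtain ⟨g, hg₀, hg₁⟩ := hv.exists_SL2_col 0
  have hdet : IsUnit g.val.det := by simp only [g.det_coe, isUnit_one]
  refine ⟨b.map (Matrix.toLinearEquiv b g.val hdet), ?_⟩
  calc b.map (Matrix.toLinearEquiv b g.val hdet) 0
      = ∑ i, g.val i 0 • b i := Matrix.toLin_self b b g.val 0
    _ = ∑ i, b.repr v i • b i := by simp only [Fin.sum_univ_two, hg₀, hg₁]
    _ = v := b.sum_repr v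

theorem isCoprime_repr_one (b : Module.Basis (Fin 2) R A) :
    IsCoprime (b.repr 1 0) (b.repr 1 1) := by
  refine ⟨b.repr (b 0 * b 0) 0, b.repr (b 1 * b 0) 0, ?_⟩
  have hone : b.repr 1 0 • b 0 + b.repr 1 1 • b 1 = 1 := by
    rw [← Fin.sum_univ_two fun i ↦ b.repr 1 i • b i, b.sum_repr]
  calc b.repr (b 0 * b 0) 0 * b.repr 1 0 + b.repr (b 1 * b 0) 0 * b.repr 1 1
      = b.repr ((b.repr 1 0 • b 0 + b.repr 1 1 • b 1) * b 0) 0 := by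
        simp [add_mul, mul_comm]
    _ = 1 := by simp [hone]

theorem exists_basis_zero_eq_one (b : Module.Basis (Fin 2) R A) :
    ∃ b' : Module.Basis (Fin 2) R A, b' 0 = 1 :=
  exists_basis_zero_eq_of_isCoprime_repr b (isCoprime_repr_one b)

end Basis

theorem adjugate_fin_two_eq_trace_smul_one_sub {R : Type*} [CommRing R]
    (M : Matrix (Fin 2) (Fin 2) R) : M.adjugate = M.trace • 1 - M := by
  ext i j
  fin_cases i <;> fin_cases j <;> simp [Matrix.adjugate_fin_two, Matrix.trace_fin_two]

section TraceConj

variable {R A : Type*} [CommRing R] [CommRing A] [Algebra R A]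

variable (R A) in
/-- The conjugation `v ↦ tr v • 1 - v` of an `R`-algebra `A`. It is the standard involution when
`A` is free of rank two. -/
noncomputable def traceConj : A →ₗ[R] A :=
  (Algebra.trace R A).smulRight 1 - LinearMap.id

theorem traceConj_apply (v : A) : traceConj R A v = Algebra.trace R A v • 1 - v := rfl

theorem add_traceConj (v : A) : v + traceConj R A v = Algebra.trace R A v • 1 := by
  rw [traceConj_apply, add_sub_cancel]

theorem trace_one_eq_two (b : Module.Basis (Fin 2) R A) : Algebra.trace R A 1 = 2 := by
  simpa using Algebra.trace_algebraMap_of_basis b (1 : R)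

theorem traceConj_one (b : Module.Basis (Fin 2) R A) : traceConj R A 1 = 1 := by
  rw [traceConj_apply, trace_one_eq_two b, two_smul, add_sub_cancel_right]

theorem traceConj_involutive (b : Module.Basis (Fin 2) R A) :
    Function.Involutive (traceConj R A) := by
  intro v
  rw [traceConj_apply v, map_sub, map_smul, traceConj_one b, traceConj_apply, sub_sub_cancel]

theorem leftMulMatrix_traceConj (b : Module.Basis (Fin 2) R A) (v : A) :
    Algebra.leftMulMatrix b (traceConj R A v) = (Algebra.leftMulMatrix b v).adjugate := by
  rw [adjugate_fin_two_eq_trace_smul_one_sub, traceConj_apply, map_sub, map_smul, map_one,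
    Algebra.trace_eq_matrix_trace b]

theorem mul_traceConj (b : Module.Basis (Fin 2) R A) (v : A) :
    v * traceConj R A v = Algebra.norm R v • 1 := by
  apply Algebra.leftMulMatrix_injective b
  rw [map_mul, leftMulMatrix_traceConj, Matrix.mul_adjugate, map_smul, map_one,
    Algebra.norm_eq_matrix_det b]

theorem eq_trace_of_mul_smul_one_sub {b : Module.Basis (Fin 2) R A} (hb : b 0 = 1) {k m : R}
    (h : b 1 * (k • 1 - b 1) = m • 1) : k = Algebra.trace R A (b 1) := by
  have hdiff : (k - Algebra.trace R A (b 1)) • b 1 = (m - Algebra.norm R (b 1)) • b 0 := by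
    have hnorm := mul_traceConj b (b 1)
    rw [traceConj_apply] at hnorm
    rw [hb, sub_smul m, ← h, ← hnorm, ← mul_sub, sub_sub_sub_cancel_right, ← sub_smul,
      mul_smul_comm, mul_one]
  have hcoord := congrArg (fun w ↦ b.repr w 1) hdiff
  simpa [sub_eq_zero] using hcoord

theorem eq_traceConj (b : Module.Basis (Fin 2) R A) {τ : A →ₗ[R] A} (hone : τ 1 = 1)
    (hadd : ∀ v, ∃ k : R, v + τ v = k • 1) (hmul : ∀ v, ∃ k : R, v * τ v = k • 1) :
    τ = traceConj R A := by
  obtain ⟨b', hb'⟩ := exists_basis_zero_eq_one b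
  refine b'.ext (Fin.forall_fin_two.mpr ⟨?_, ?_⟩)
  · rw [hb', hone, traceConj_one b]
  · obtain ⟨k, hk⟩ := hadd (b' 1)
    obtain ⟨m, hm⟩ := hmul (b' 1)
    have hτ : τ (b' 1) = k • 1 - b' 1 := eq_sub_of_add_eq' hk
    rw [hτ] at hm
    rw [hτ, eq_trace_of_mul_smul_one_sub hb' hm, traceConj_apply]

theorem stmt1_general (b : Module.Basis (Fin 2) R A) :
    ∃! σ : A ≃ₗ[R] A, (∀ v : A, σ (σ v) = v) ∧ σ 1 = 1 ∧
      ∀ v : A, (∃ k : R, v + σ v = k • 1) ∧ (∃ k : R, v * σ v = k • 1) := by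
  refine ⟨.ofInvolutive (traceConj R A) (traceConj_involutive b),
    ⟨traceConj_involutive b, traceConj_one b,
      fun v ↦ ⟨⟨_, add_traceConj v⟩, ⟨_, mul_traceConj b v⟩⟩⟩, ?_⟩
  rintro τ ⟨-, hone, hτ⟩
  exact LinearEquiv.toLinearMap_injective
    (eq_traceConj b hone (fun v ↦ (hτ v).1) fun v ↦ (hτ v).2)

end TraceConj

section OfBilinear

variable {R V : Type*} [CommSemiring R] [AddCommGroup V] [Module R V] {mul : V → V → V}

/-- The commutative ring whose multiplication is an unbundled commutative, associative and
bilinear map `mul` with identity `e`. Reducible, so that its additive group is recognized as the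
given one. -/
abbrev commRingOfMul (hcomm : ∀ a b : V, mul a b = mul b a)
    (hassoc : ∀ a b c : V, mul (mul a b) c = mul a (mul b c))
    (hbilin : ∀ (r : R) (u v w : V), mul (r • v + w) u = r • mul v u + mul w u)
    {e : V} (he : ∀ v : V, mul e v = v) : CommRing V :=
  have hadd (u v w : V) : mul (u + v) w = mul u w + mul v w := by
    simpa only [one_smul] using hbilin 1 w u v
  have hzero (u : V) : mul 0 u = 0 := by simpa using hadd 0 0 u
  { ‹AddCommGroup V› with
    mul
    one := e
    mul_comm := hcomm
    mul_assoc := hassoc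
    one_mul := he
    mul_one v := (hcomm v e).trans (he v)
    right_distrib := hadd
    left_distrib u v w := by
      change mul u (v + w) = mul u v + mul u w
      rw [hcomm u, hadd, hcomm v, hcomm w]
    zero_mul := hzero
    mul_zero u := (hcomm u 0).trans (hzero u) }

/-- The `R`-algebra structure on `commRingOfMul` that extends the given module structure. -/
abbrev algebraOfMul (hcomm : ∀ a b : V, mul a b = mul b a)
    (hassoc : ∀ a b c : V, mul (mul a b) c = mul a (mul b c))
    (hbilin : ∀ (r : R) (u v w : V), mul (r • v + w) u = r • mul v u + mul w u)
    {e : V} (he : ∀ v : V, mul e v = v) :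
    letI := commRingOfMul hcomm hassoc hbilin he
    Algebra R V :=
  letI := commRingOfMul hcomm hassoc hbilin he
  have hsmul (r : R) (u v : V) : r • u * v = r • (u * v) := by
    have h : (r • u + 0) * v = r • (u * v) + 0 * v := hbilin r v u 0
    rwa [add_zero, zero_mul, add_zero] at h
  Algebra.ofModule hsmul fun r u v ↦ by rw [mul_comm, hsmul, mul_comm]

end OfBilinear

/-- Let `K` be a commutative field and `V` a 2-dimensional `K`-vector space
with a commutative, associative, `K`-bilinear multiplication `mul` such that every element of
`V` is a product of two elements, and let `e` be its multiplicative identity.  Then there is a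
unique `K`-linear bijection `σ : V → V` with `σ ∘ σ = id` and `σ e = e` such that for every
`v ∈ V` both `v + σ v` and `v × σ v` lie in `K·e`. -/
theorem stmt1 (K : Type) [Field K] (V : Type) [AddCommGroup V] [Module K V]
    (mul : V → V → V)
    (hcomm : ∀ a b : V, mul a b = mul b a)
    (hassoc : ∀ a b c : V, mul (mul a b) c = mul a (mul b c))
    (hbilin : ∀ (r : K) (u v w : V), mul (r • v + w) u = r • mul v u + mul w u)
    (hdim : Module.finrank K V = 2)
    (hprod : ∀ v : V, ∃ a b : V, v = mul a b)
    (e : V) (he : ∀ v : V, mul e v = v) :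
    ∃! σ : V ≃ₗ[K] V, (∀ v : V, σ (σ v) = v) ∧ σ e = e ∧
      ∀ v : V, (∃ k : K, v + σ v = k • e) ∧ (∃ k : K, mul v (σ v) = k • e) := by
  let := commRingOfMul hcomm hassoc hbilin he
  let := algebraOfMul hcomm hassoc hbilin he
  have := Module.finite_of_finrank_eq_succ hdim
  exact stmt1_general (Module.finBasisOfFinrankEq K V hdim)
end

section
/- Let L₁ = V*[a₁,b₁,c₁] and L₂ = V*[a₂,b₂,c₂] be two lines of 𝒢(V), and set A = b₁c₂ − b₂c₁, B = c₁a₂ − c₂a₁, C = a₁b₂ − a₂b₁. Then L₁ and L₂ are not neighboring if and only if the triple (A,B,C) has trivial annihilator in V (i.e., V*(A,B,C) is a point of 𝒢(V)). -/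
/-! Context: `K` a field, `V` a commutative, associative, unital 2-dimensional `K`-algebra in
which every element is a product of two elements; `V₀ = K·r ∪ K·s` is the set of non-units.
Points and lines of the geometry `𝒢(V)` are represented by triples in `V × V × V` with
trivial annihilator, up to multiplication by a unit. -/

/-- The triple `p` has trivial annihilator (so `V*p` is a point/line of `𝒢(V)`). -/
def TrivAnn {V : Type} [CommRing V] (p : V × V × V) : Prop :=
  ∀ v : V, v * p.1 = 0 → v * p.2.1 = 0 → v * p.2.2 = 0 → v = 0

/-- The point (represented by) `p` is incident with the line (represented by) `L`. -/
def Incid {V : Type} [CommRing V] (p L : V × V × V) : Prop :=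
  L.1 * p.1 + L.2.1 * p.2.1 + L.2.2 * p.2.2 = 0

/-- Two points (or two lines) are neighboring. -/
def Nbr {V : Type} [CommRing V] (p q : V × V × V) : Prop :=
  ∃ k l : V, (k, l) ≠ ((0 : V), (0 : V)) ∧
    (k * p.1, k * p.2.1, k * p.2.2) = (l * q.1, l * q.2.1, l * q.2.2)

/-- The point `p` and the line `L` are neighboring. -/
def NbrPL {V : Type} [CommRing V] (p L : V × V × V) : Prop :=
  ¬ IsUnit (L.1 * p.1 + L.2.1 * p.2.1 + L.2.2 * p.2.2)

/-- `p` and `q` represent the same point (resp. line) of `𝒢(V)`. -/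
def SameCls {V : Type} [CommRing V] (p q : V × V × V) : Prop :=
  ∃ u : V, IsUnit u ∧ (u * p.1, u * p.2.1, u * p.2.2) = q

/-- The standing hypotheses on the algebra `V` over `K`: it is `2`-dimensional, every element
is a product of two elements, and the set of non-units is `K·r ∪ K·s`. -/
def GoodAlg (K : Type) [Field K] (V : Type) [CommRing V] [Algebra K V] (r s : V) : Prop :=
  Module.finrank K V = 2 ∧ (∀ v : V, ∃ a b : V, v = a * b) ∧
    (∀ v : V, ¬ IsUnit v ↔ ((∃ k : K, v = k • r) ∨ (∃ k : K, v = k • s)))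

/-! Non-neighboring means that the coordinate vectors `v, w ∈ V³` are linearly independent over
`V`, and `(A, B, C)` is the cross product `v × w`. Over any commutative ring, a relation
`s v = t w` gives `s (v × w) = t (v × w) = 0` by taking cross products with `w` and `v`.
Conversely, if `t (v × w) = 0`, then `u × (v × w) = (u · w) v - (v · u) w` yields, for each basis
vector `u = eᵢ`, the relation `(t wᵢ) v = (t vᵢ) w`; independence forces `t v = 0`, and then
`t = 0`. -/

theorem linearIndependent_pair_iff_forall_smul_eq_smul {R M : Type*} [Ring R] [AddCommGroup M]
    [Module R M] {x y : M} :
    LinearIndependent R ![x, y] ↔ ∀ s t : R, s • x = t • y → s = 0 ∧ t = 0 := by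
  rw [← LinearIndependent.pair_neg_right_iff, LinearIndependent.pair_iff]
  simp only [smul_neg, ← sub_eq_add_neg, sub_eq_zero]

section CrossProduct

open scoped Matrix

variable {R : Type*} [CommRing R] {v w : Fin 3 → R}

theorem smul_crossProduct_eq_zero_of_smul_eq_smul {s t : R} (h : s • v = t • w) :
    s • (v ⨯₃ w) = 0 ∧ t • (v ⨯₃ w) = 0 := by
  constructor
  · calc s • (v ⨯₃ w) = (s • v) ⨯₃ w := by rw [map_smul, LinearMap.smul_apply]
      _ = (t • w) ⨯₃ w := by rw [h]
      _ = 0 := by rw [map_smul, LinearMap.smul_apply, cross_self, smul_zero]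
  · calc t • (v ⨯₃ w) = v ⨯₃ (t • w) := by rw [map_smul]
      _ = v ⨯₃ (s • v) := by rw [h]
      _ = 0 := by rw [map_smul, cross_self, smul_zero]

theorem smul_eq_smul_of_smul_crossProduct_eq_zero {t : R} (h : t • (v ⨯₃ w) = 0)
    (u : Fin 3 → R) : (t * u ⬝ᵥ w) • v = (t * v ⬝ᵥ u) • w := by
  have h_triple : t • ((u ⬝ᵥ w) • v - (v ⬝ᵥ u) • w) = 0 := by
    rw [← cross_cross_eq_smul_sub_smul', ← map_smul, h, map_zero]
  rwa [smul_sub, sub_eq_zero, smul_smul, smul_smul] at h_triple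

theorem linearIndependent_pair_iff_torsionOf_crossProduct_eq_bot :
    LinearIndependent R ![v, w] ↔ Ideal.torsionOf R (Fin 3 → R) (v ⨯₃ w) = ⊥ := by
  simp only [linearIndependent_pair_iff_forall_smul_eq_smul, Submodule.eq_bot_iff,
    Ideal.mem_torsionOf_iff]
  constructor
  · intro h_indep t ht
    have hv : t • v = 0 := by
      ext i
      have h_rel := smul_eq_smul_of_smul_crossProduct_eq_zero ht (Pi.single i 1)
      simpa using (h_indep _ _ h_rel).2
    exact (h_indep t 0 (by rw [hv, zero_smul])).1
  · intro h_torsion s t hst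
    obtain ⟨hs, ht⟩ := smul_crossProduct_eq_zero_of_smul_eq_smul hst
    exact ⟨h_torsion s hs, h_torsion t ht⟩

end CrossProduct

section Triples

variable {V : Type} [CommRing V]

theorem trivAnn_iff_torsionOf_eq_bot {a b c : V} :
    TrivAnn (a, b, c) ↔ Ideal.torsionOf V (Fin 3 → V) ![a, b, c] = ⊥ := by
  simp [TrivAnn, Submodule.eq_bot_iff]

theorem not_nbr_iff_linearIndependent {a₁ b₁ c₁ a₂ b₂ c₂ : V} :
    ¬ Nbr (a₁, b₁, c₁) (a₂, b₂, c₂) ↔ LinearIndependent V ![![a₁, b₁, c₁], ![a₂, b₂, c₂]] := by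
  rw [linearIndependent_pair_iff_forall_smul_eq_smul]
  simp only [Nbr, not_exists, not_and', ne_eq, not_not]
  simp only [Prod.mk.injEq, Matrix.smul_vec3, smul_eq_mul, Matrix.vecCons_inj, and_true]

end Triples

theorem stmt2_general {V : Type} [CommRing V] (a₁ b₁ c₁ a₂ b₂ c₂ : V) :
    ¬ Nbr (a₁, b₁, c₁) (a₂, b₂, c₂) ↔
      TrivAnn (b₁ * c₂ - b₂ * c₁, c₁ * a₂ - c₂ * a₁, a₁ * b₂ - a₂ * b₁) := by
  have h_cross : crossProduct ![a₁, b₁, c₁] ![a₂, b₂, c₂] =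
      ![b₁ * c₂ - b₂ * c₁, c₁ * a₂ - c₂ * a₁, a₁ * b₂ - a₂ * b₁] := by
    simp [cross_apply, mul_comm]
  rw [not_nbr_iff_linearIndependent, linearIndependent_pair_iff_torsionOf_crossProduct_eq_bot,
    h_cross, trivAnn_iff_torsionOf_eq_bot]

/-- Two lines `L₁ = V*[a₁,b₁,c₁]`, `L₂ = V*[a₂,b₂,c₂]` of `𝒢(V)` are
non-neighboring iff the triple `(A,B,C)` of 2×2 minors has trivial annihilator,
i.e. `V*(A,B,C)` is a point of `𝒢(V)`. -/
theorem stmt2 (K : Type) [Field K] (V : Type) [CommRing V] [Algebra K V] (r s : V)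
    (hV : GoodAlg K V r s)
    (a₁ b₁ c₁ a₂ b₂ c₂ : V)
    (hL₁ : TrivAnn (a₁, b₁, c₁)) (hL₂ : TrivAnn (a₂, b₂, c₂)) :
    ¬ Nbr (a₁, b₁, c₁) (a₂, b₂, c₂) ↔
      TrivAnn (b₁ * c₂ - b₂ * c₁, c₁ * a₂ - c₂ * a₁, a₁ * b₂ - a₂ * b₁) :=
  stmt2_general a₁ b₁ c₁ a₂ b₂ c₂
end

section
/- Let L₁ = V*[a₁,b₁,c₁] and L₂ = V*[a₂,b₂,c₂] be two non-neighboring lines of 𝒢(V), and set A = b₁c₂ − b₂c₁, B = c₁a₂ − c₂a₁, C = a₁b₂ − a₂b₁. Then a triple (A',B',C') ∈ V³ satisfies A'a₁ + B'b₁ + C'c₁ = 0 and A'a₂ + B'b₂ + C'c₂ = 0 if and only if (A',B',C') = m·(A,B,C) for some m ∈ V. -/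
/-!
In coordinate-free form, two lines `v, w ∈ V³` are non-neighboring exactly when they are linearly
independent, and the triple of minors is `v ⨯₃ w`. If `c • (v ⨯₃ w) = 0`, then expanding
`(c • (v ⨯₃ w)) ⨯₃ u = 0` gives a relation between `v` and `w` with coefficients `c * (v ⬝ᵥ u)` and
`c * (w ⬝ᵥ u)`, so `c • v = 0` and hence `c = 0`: the ideal of minors has zero annihilator.

In a zero-dimensional ring, such as a finite-dimensional algebra, a finitely generated ideal `I`
with zero annihilator is the whole ring: if `I ≤ p` with `p` prime, then `I` becomes nilpotent in
the localization at `p`, so some `s ∉ p` kills a power of `I`, although that power has zero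
annihilator as well.

Hence `u ⬝ᵥ (v ⨯₃ w) = 1` for some `u`. If `x` is orthogonal to `v` and `w`, then
`(v ⨯₃ w) ⨯₃ x = 0`, and expanding `u ⨯₃ ((v ⨯₃ w) ⨯₃ x) = 0` yields `x = (u ⬝ᵥ x) • (v ⨯₃ w)`.
-/

section ZeroDimensional

variable {R : Type*} [CommRing R]

theorem annihilator_pow_eq_bot {I : Ideal R} (hI : I.annihilator = ⊥) (n : ℕ) :
    (I ^ n).annihilator = ⊥ := by
  induction n with
  | zero => simp [Ideal.one_eq_top, Submodule.annihilator_top, Module.annihilator_eq_bot.mpr]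
  | succ n ih =>
    have hzero : ((I ^ (n + 1)).annihilator * I ^ n) * I = ⊥ := by
      rw [mul_assoc, ← pow_succ, Submodule.annihilator_mul]
    have hle : (I ^ (n + 1)).annihilator * I ^ n ≤ I.annihilator :=
      Submodule.le_annihilator_iff.mpr hzero
    rw [eq_bot_iff, ← ih]
    exact Submodule.le_annihilator_iff.mpr (le_bot_iff.mp (hI ▸ hle))

theorem exists_map_localization_pow_eq_bot {I p : Ideal R} [p.IsPrime] (hI : I.FG)
    (hp : p ∈ minimalPrimes R) (hIp : I ≤ p) :
    ∃ n, (I ^ n).map (algebraMap R (Localization.AtPrime p)) = ⊥ := by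
  have : Ring.KrullDimLE 0 (Localization.AtPrime p) := .of_isLocalization p hp _
  have hnil : I.map (algebraMap R (Localization.AtPrime p)) ≤ nilradical _ := by
    rw [Ring.KrullDimLE.nilradical_eq_maximalIdeal, ← Localization.AtPrime.map_eq_maximalIdeal]
    exact Ideal.map_mono hIp
  obtain ⟨n, hn⟩ := ((hI.map _).isNilpotent_iff_le_nilradical).mpr hnil
  exact ⟨n, by rw [Ideal.map_pow, hn, Ideal.zero_eq_bot]⟩

theorem annihilator_not_le_of_map_localization_eq_bot {I p : Ideal R} [p.IsPrime] (hI : I.FG)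
    (hmap : I.map (algebraMap R (Localization.AtPrime p)) = ⊥) :
    ¬ I.annihilator ≤ p := by
  have : Module.Finite R I := Module.Finite.iff_fg.mpr hI
  rw [← Module.mem_support_iff_of_finite (p := ⟨p, inferInstance⟩), Module.notMem_support_iff']
  rintro ⟨x, hx⟩
  have hx0 : algebraMap R (Localization.AtPrime p) x = 0 := by
    simpa only [hmap, Ideal.mem_bot] using
      Ideal.mem_map_of_mem (algebraMap R (Localization.AtPrime p)) hx
  obtain ⟨s, hs⟩ := (IsLocalization.map_eq_zero_iff p.primeCompl _ x).mp hx0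
  exact ⟨s, s.2, Subtype.ext hs⟩

theorem annihilator_ne_bot_of_le_minimalPrime {I p : Ideal R} (hI : I.FG)
    (hp : p ∈ minimalPrimes R) (hIp : I ≤ p) : I.annihilator ≠ ⊥ := by
  intro hbot
  have : p.IsPrime := Ideal.IsMinimalPrime.isPrime hp
  obtain ⟨n, hn⟩ := exists_map_localization_pow_eq_bot hI hp hIp
  apply annihilator_not_le_of_map_localization_eq_bot hI.pow hn
  rw [annihilator_pow_eq_bot hbot]
  exact bot_le

theorem eq_top_of_annihilator_eq_bot [Ring.KrullDimLE 0 R] {I : Ideal R} (hI : I.FG)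
    (hbot : I.annihilator = ⊥) : I = ⊤ := by
  by_contra hne
  obtain ⟨p, hp, hIp⟩ := Ideal.exists_le_maximal I hne
  exact annihilator_ne_bot_of_le_minimalPrime hI (Ideal.mem_minimalPrimes_of_krullDimLE_zero p) hIp
    hbot

end ZeroDimensional

section CrossProduct

open scoped Matrix

variable {R : Type*} [CommRing R] {v w : Fin 3 → R}

theorem eq_zero_of_smul_cross_eq_zero (h : LinearIndependent R ![v, w]) {c : R}
    (hc : c • (v ⨯₃ w) = 0) : c = 0 := by
  rw [LinearIndependent.pair_iff] at h
  have hrel (u : Fin 3 → R) : (-(c * (w ⬝ᵥ u))) • v + (c * (v ⬝ᵥ u)) • w = 0 := calc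
    _ = c • ((v ⬝ᵥ u) • w - (w ⬝ᵥ u) • v) := by module
    _ = (c • (v ⨯₃ w)) ⨯₃ u := by
      rw [map_smul, LinearMap.smul_apply, cross_cross_eq_smul_sub_smul]
    _ = 0 := by rw [hc, map_zero, LinearMap.zero_apply]
  have hdot (u : Fin 3 → R) : c * (v ⬝ᵥ u) = 0 := (h _ _ (hrel u)).2
  have hv : c • v = 0 := by
    ext i
    simpa using hdot (Pi.single i 1)
  exact (h c 0 (by rw [hv, zero_smul, add_zero])).1

theorem annihilator_span_range_cross (h : LinearIndependent R ![v, w]) :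
    (Ideal.span (Set.range (v ⨯₃ w))).annihilator = ⊥ := by
  refine eq_bot_iff.mpr fun c hc ↦ eq_zero_of_smul_cross_eq_zero h (funext fun i ↦ ?_)
  exact Submodule.mem_annihilator.mp hc _ (Ideal.subset_span (Set.mem_range_self i))

theorem dotProduct_eq_zero_and_iff_exists_eq_smul_cross
    (h : Ideal.span (Set.range (v ⨯₃ w)) = ⊤) (x : Fin 3 → R) :
    (v ⬝ᵥ x = 0 ∧ w ⬝ᵥ x = 0) ↔ ∃ m : R, x = m • (v ⨯₃ w) := by
  constructor
  · rintro ⟨hv, hw⟩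
    obtain ⟨u, hu⟩ : ∃ u, u ⬝ᵥ (v ⨯₃ w) = 1 :=
      Ideal.mem_span_range_iff_exists_fun.mp (h ▸ Submodule.mem_top)
    have hparallel : v ⨯₃ w ⨯₃ x = 0 := by
      rw [cross_cross_eq_smul_sub_smul, hv, hw, zero_smul, zero_smul, sub_zero]
    have hexpand : (u ⬝ᵥ x) • (v ⨯₃ w) - x = 0 := calc
      _ = u ⨯₃ (v ⨯₃ w ⨯₃ x) := by
        rw [cross_cross_eq_smul_sub_smul' u, dotProduct_comm _ u, hu, one_smul]
      _ = 0 := by rw [hparallel, map_zero]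
    exact ⟨u ⬝ᵥ x, (sub_eq_zero.mp hexpand).symm⟩
  · rintro ⟨m, rfl⟩
    simp only [dotProduct_smul, dot_self_cross, dot_cross_self, smul_zero, and_self]

end CrossProduct

theorem linearIndependent_iff_not_nbr {V : Type} [CommRing V] {a₁ b₁ c₁ a₂ b₂ c₂ : V} :
    LinearIndependent V ![![a₁, b₁, c₁], ![a₂, b₂, c₂]] ↔ ¬ Nbr (a₁, b₁, c₁) (a₂, b₂, c₂) := by
  rw [LinearIndependent.pair_iff]
  constructor
  · rintro hli ⟨k, l, hkl, h⟩
    obtain ⟨hk, hl⟩ := hli k (-l) (by simpa [← sub_eq_add_neg, sub_eq_zero] using h)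
    exact hkl (by rw [hk, neg_eq_zero.mp hl])
  · intro hnn k l h
    by_contra hkl
    exact hnn ⟨k, -l, by simpa using hkl, by simpa [add_eq_zero_iff_eq_neg] using h⟩

theorem stmt3_general {V : Type} [CommRing V] [Ring.KrullDimLE 0 V] {a₁ b₁ c₁ a₂ b₂ c₂ : V}
    (hnn : ¬ Nbr (a₁, b₁, c₁) (a₂, b₂, c₂)) (A' B' C' : V) :
    (A' * a₁ + B' * b₁ + C' * c₁ = 0 ∧ A' * a₂ + B' * b₂ + C' * c₂ = 0) ↔
      ∃ m : V, A' = m * (b₁ * c₂ - b₂ * c₁) ∧ B' = m * (c₁ * a₂ - c₂ * a₁) ∧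
        C' = m * (a₁ * b₂ - a₂ * b₁) := by
  have hli := linearIndependent_iff_not_nbr.mpr hnn
  have htop := eq_top_of_annihilator_eq_bot (Submodule.fg_span (Set.finite_range _))
    (annihilator_span_range_cross hli)
  simpa [Matrix.vec3_dotProduct, cross_apply, mul_comm, add_assoc] using
    dotProduct_eq_zero_and_iff_exists_eq_smul_cross htop ![A', B', C']

/-- For two non-neighboring lines `L₁ = V*[a₁,b₁,c₁]`, `L₂ = V*[a₂,b₂,c₂]`
and `(A,B,C)` the triple of 2×2 minors, a triple `(A',B',C')` satisfies both incidence
equations iff it is a `V`-multiple of `(A,B,C)`. -/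
theorem stmt3 (K : Type) [Field K] (V : Type) [CommRing V] [Algebra K V] (r s : V)
    (hV : GoodAlg K V r s)
    (a₁ b₁ c₁ a₂ b₂ c₂ : V)
    (hL₁ : TrivAnn (a₁, b₁, c₁)) (hL₂ : TrivAnn (a₂, b₂, c₂))
    (hnn : ¬ Nbr (a₁, b₁, c₁) (a₂, b₂, c₂))
    (A' B' C' : V) :
    (A' * a₁ + B' * b₁ + C' * c₁ = 0 ∧ A' * a₂ + B' * b₂ + C' * c₂ = 0) ↔
      ∃ m : V, A' = m * (b₁ * c₂ - b₂ * c₁) ∧ B' = m * (c₁ * a₂ - c₂ * a₁) ∧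
        C' = m * (a₁ * b₂ - a₂ * b₁) := by
  have : Module.Finite K V := Module.finite_of_finrank_pos (by rw [hV.1]; norm_num)
  have : IsArtinianRing V := isArtinian_of_tower K inferInstance
  exact stmt3_general hnn A' B' C'
end

section
/- Let L₁ = V*[a₁,b₁,c₁] and L₂ = V*[a₂,b₂,c₂] be two non-neighboring lines of 𝒢(V), and set A = b₁c₂ − b₂c₁, B = c₁a₂ − c₂a₁, C = a₁b₂ − a₂b₁. Then L₁ and L₂ have exactly one common point, namely V*(A,B,C). Moreover, if a point of L₁ is neighboring the line L₂, then it is neighboring the point V*(A,B,C). -/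
/-! In the language of vector algebra, `V*(A,B,C)` is the cross product of the two lines, and
everything follows from the expansion `u × (v × w) = (w ⬝ u) v - (v ⬝ u) w`. Taking `u` to be a
standard basis vector, it shows that if some `t ≠ 0` annihilates `p × q`, then `p` and `q` are
neighboring; hence non-neighboring lines have a cross product with trivial annihilator. Taking
`u = p` for a point `p` of `L`, it gives `p × (L × M) = (M ⬝ p) L`. If `p` is neighboring `M`, then
`M ⬝ p` is a zero divisor, so some `t ≠ 0` annihilates `p × (L × M)`. If `p` lies on `M`, then
`p × (L × M) = 0`; since a triple with trivial annihilator generates the unit ideal, some `u` has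
`p ⬝ u = 1`, and the expansion of `u × (p × (L × M))` shows that `L × M` is a multiple of `p`. -/

section Triple

variable {R : Type*} [CommRing R]

/-- The dot product of two triples; the point `p` lies on the line `L` iff `tripleDot L p = 0`. -/
def tripleDot (u v : R × R × R) : R :=
  u.1 * v.1 + u.2.1 * v.2.1 + u.2.2 * v.2.2

/-- The cross product of two triples. For two lines it is the triple `(A, B, C)` representing their
common point. It transports Mathlib's `crossProduct` from `Fin 3 → R` to `R × R × R`. -/
def tripleCross (u v : R × R × R) : R × R × R :=
  (u.2.1 * v.2.2 - v.2.1 * u.2.2, u.2.2 * v.1 - v.2.2 * u.1, u.1 * v.2.1 - v.1 * u.2.1)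

/-- A triple is unimodular if its entries generate the unit ideal. -/
def IsUnimodular (p : R × R × R) : Prop :=
  ∃ w, tripleDot p w = 1

theorem tripleDot_smul_left (a : R) (u v : R × R × R) :
    tripleDot (a • u) v = a * tripleDot u v := by
  simp only [tripleDot, Prod.smul_fst, Prod.smul_snd, smul_eq_mul]
  ring

theorem tripleCross_tripleCross (u v w : R × R × R) :
    tripleCross u (tripleCross v w) = tripleDot w u • v - tripleDot v u • w := by
  ext <;> simp only [tripleCross, tripleDot, Prod.fst_sub, Prod.snd_sub, Prod.smul_fst,
    Prod.smul_snd, smul_eq_mul] <;> ring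

theorem tripleCross_zero_right (u : R × R × R) : tripleCross u 0 = 0 := by
  simp [tripleCross]

theorem tripleCross_smul_right (a : R) (u v : R × R × R) :
    tripleCross u (a • v) = a • tripleCross u v := by
  ext <;> simp only [tripleCross, Prod.smul_fst, Prod.smul_snd, smul_eq_mul] <;> ring

end Triple

section Incidence

variable {V : Type} [CommRing V] {p q L M : V × V × V}

theorem trivAnn_iff_forall_smul_eq_zero : TrivAnn p ↔ ∀ v : V, v • p = 0 → v = 0 := by
  simp only [TrivAnn, Prod.ext_iff, Prod.smul_fst, Prod.smul_snd, smul_eq_mul, Prod.fst_zero,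
    Prod.snd_zero, and_imp]

theorem TrivAnn.exists_mul_tripleDot_ne_zero (hp : TrivAnn p) {t : V} (ht : t ≠ 0) :
    ∃ e, t * tripleDot p e ≠ 0 := by
  by_contra! h
  exact ht <| hp t (by simpa [tripleDot] using h (1, 0, 0))
    (by simpa [tripleDot] using h (0, 1, 0)) (by simpa [tripleDot] using h (0, 0, 1))

theorem TrivAnn.nbr_of_smul_tripleCross_eq_zero (hp : TrivAnn p) {t : V} (ht : t ≠ 0)
    (h : t • tripleCross p q = 0) : Nbr p q := by
  obtain ⟨e, he⟩ := hp.exists_mul_tripleDot_ne_zero ht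
  have hpq : (t * tripleDot q e) • p = (t * tripleDot p e) • q := by
    rw [← sub_eq_zero, mul_smul, mul_smul, ← smul_sub, ← tripleCross_tripleCross,
      ← tripleCross_smul_right, h, tripleCross_zero_right]
  exact ⟨t * tripleDot q e, t * tripleDot p e, fun h₀ ↦ he (congrArg Prod.snd h₀), hpq⟩

theorem TrivAnn.tripleCross_of_not_nbr (hL : TrivAnn L) (hLM : ¬ Nbr L M) :
    TrivAnn (tripleCross L M) :=
  trivAnn_iff_forall_smul_eq_zero.2 fun _ ht ↦
    by_contra fun ht₀ ↦ hLM (hL.nbr_of_smul_tripleCross_eq_zero ht₀ ht)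

theorem incid_tripleCross_left (L M : V × V × V) : Incid (tripleCross L M) L := by
  simp only [Incid, tripleCross]
  ring

theorem incid_tripleCross_right (L M : V × V × V) : Incid (tripleCross L M) M := by
  simp only [Incid, tripleCross]
  ring

theorem Incid.tripleCross_tripleCross_eq_smul (hpL : Incid p L) (M : V × V × V) :
    tripleCross p (tripleCross L M) = tripleDot M p • L := by
  have h : tripleDot L p = 0 := hpL
  rw [tripleCross_tripleCross, h, zero_smul, sub_zero]

theorem Incid.tripleCross_tripleCross_eq_zero (hpL : Incid p L) (hpM : Incid p M) :
    tripleCross p (tripleCross L M) = 0 := by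
  have h : tripleDot M p = 0 := hpM
  rw [hpL.tripleCross_tripleCross_eq_smul, h, zero_smul]

theorem IsUnimodular.sameCls_of_tripleCross_eq_zero (hp : IsUnimodular p) (hq : IsUnimodular q)
    (h : tripleCross p q = 0) : SameCls p q := by
  obtain ⟨v, hv⟩ := hp
  obtain ⟨w, hw⟩ := hq
  have hpq : tripleDot q v • p = q := by
    rw [← sub_eq_zero]
    calc tripleDot q v • p - q = tripleCross v (tripleCross p q) := by
          rw [tripleCross_tripleCross, hv, one_smul]
      _ = 0 := by rw [h, tripleCross_zero_right]
  have hunit : tripleDot q v * tripleDot p w = 1 := by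
    rw [← tripleDot_smul_left, hpq, hw]
  exact ⟨tripleDot q v, .of_mul_eq_one _ hunit, hpq⟩

end Incidence

section TotalRingOfFractions

theorem exists_ne_zero_mul_eq_zero_of_not_isUnit {R : Type*} [CommRing R] [IsFractionRing R R]
    {a : R} (ha : ¬ IsUnit a) : ∃ t : R, t ≠ 0 ∧ t * a = 0 := by
  have : a ∉ nonZeroDivisors R :=
    fun h ↦ ha (IsFractionRing.self_iff_nonZeroDivisors_le_isUnit.1 inferInstance h)
  simpa [mem_nonZeroDivisors_iff_right, and_comm] using this

instance isFractionRing_self_of_isArtinianRing {R : Type*} [CommRing R] [IsArtinianRing R] :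
    IsFractionRing R R :=
  IsFractionRing.self_iff_nonZeroDivisors_le_isUnit.2 fun _ ↦
    IsArtinianRing.isUnit_of_mem_nonZeroDivisors

theorem ideal_eq_top_of_annihilator_eq_bot {R : Type*} [CommRing R] [IsNoetherianRing R]
    [IsFractionRing R R] {I : Ideal R} (hI : Module.annihilator R I = ⊥) : I = ⊤ := by
  have : FaithfulSMul R I := Module.annihilator_eq_bot.1 hI
  obtain ⟨a, haI, ha⟩ := I.nonempty_inter_nonZeroDivisors_of_faithfulSMul
  exact I.eq_top_of_isUnit_mem haI
    (IsFractionRing.self_iff_nonZeroDivisors_le_isUnit.1 inferInstance ha)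

variable {V : Type} [CommRing V] [IsFractionRing V V] {p L M : V × V × V}

theorem TrivAnn.isUnimodular [IsNoetherianRing V] (hp : TrivAnn p) : IsUnimodular p := by
  have hann : (Ideal.span {p.1, p.2.1, p.2.2}).annihilator = ⊥ := by
    refine (Submodule.eq_bot_iff _).2 fun t ht ↦ ?_
    have hmul := (Submodule.mem_annihilator_span _ _).1 ht
    exact hp t (hmul ⟨p.1, by simp⟩) (hmul ⟨p.2.1, by simp⟩) (hmul ⟨p.2.2, by simp⟩)
  have hone : (1 : V) ∈ Ideal.span {p.1, p.2.1, p.2.2} :=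
    ideal_eq_top_of_annihilator_eq_bot hann ▸ Submodule.mem_top
  obtain ⟨a, b, c, h⟩ := Submodule.mem_span_triple.1 hone
  exact ⟨(a, b, c), by simpa [tripleDot, mul_comm] using h⟩

theorem TrivAnn.nbr_tripleCross (hp : TrivAnn p) (hpL : Incid p L) (hpM : NbrPL p M) :
    Nbr p (tripleCross L M) := by
  obtain ⟨t, ht₀, ht⟩ : ∃ t, t ≠ 0 ∧ t * tripleDot M p = 0 :=
    exists_ne_zero_mul_eq_zero_of_not_isUnit hpM
  refine hp.nbr_of_smul_tripleCross_eq_zero ht₀ ?_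
  rw [hpL.tripleCross_tripleCross_eq_smul, smul_smul, ht, zero_smul]

theorem stmt4_general [IsNoetherianRing V] {L M : V × V × V} (hL : TrivAnn L) (hLM : ¬ Nbr L M) :
    TrivAnn (tripleCross L M) ∧ Incid (tripleCross L M) L ∧ Incid (tripleCross L M) M ∧
    (∀ p, TrivAnn p → Incid p L → Incid p M → SameCls p (tripleCross L M)) ∧
    (∀ p, TrivAnn p → Incid p L → NbrPL p M → Nbr p (tripleCross L M)) := by
  have hcross : TrivAnn (tripleCross L M) := hL.tripleCross_of_not_nbr hLM
  refine ⟨hcross, incid_tripleCross_left L M, incid_tripleCross_right L M, ?_, ?_⟩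
  · intro p hp hpL hpM
    exact hp.isUnimodular.sameCls_of_tripleCross_eq_zero hcross.isUnimodular
      (hpL.tripleCross_tripleCross_eq_zero hpM)
  · intro p hp hpL hpM
    exact hp.nbr_tripleCross hpL hpM

end TotalRingOfFractions

theorem GoodAlg.isArtinianRing {K : Type} [Field K] {V : Type} [CommRing V] [Algebra K V]
    {r s : V} (hV : GoodAlg K V r s) : IsArtinianRing V :=
  have : FiniteDimensional K V := Module.finite_of_finrank_pos (hV.1 ▸ two_pos)
  IsArtinianRing.of_finite K V

/-- Two non-neighboring lines `L₁`, `L₂` have exactly one common point,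
namely `V*(A,B,C)` where `(A,B,C)` is the triple of 2×2 minors; moreover any point of `L₁`
neighboring the line `L₂` neighbors the point `V*(A,B,C)`. -/
theorem stmt4 (K : Type) [Field K] (V : Type) [CommRing V] [Algebra K V] (r s : V)
    (hV : GoodAlg K V r s)
    (a₁ b₁ c₁ a₂ b₂ c₂ : V)
    (hL₁ : TrivAnn (a₁, b₁, c₁)) (hL₂ : TrivAnn (a₂, b₂, c₂))
    (hnn : ¬ Nbr (a₁, b₁, c₁) (a₂, b₂, c₂)) :
    TrivAnn (b₁ * c₂ - b₂ * c₁, c₁ * a₂ - c₂ * a₁, a₁ * b₂ - a₂ * b₁) ∧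
    Incid (b₁ * c₂ - b₂ * c₁, c₁ * a₂ - c₂ * a₁, a₁ * b₂ - a₂ * b₁) (a₁, b₁, c₁) ∧
    Incid (b₁ * c₂ - b₂ * c₁, c₁ * a₂ - c₂ * a₁, a₁ * b₂ - a₂ * b₁) (a₂, b₂, c₂) ∧
    (∀ p : V × V × V, TrivAnn p → Incid p (a₁, b₁, c₁) → Incid p (a₂, b₂, c₂) →
      SameCls p (b₁ * c₂ - b₂ * c₁, c₁ * a₂ - c₂ * a₁, a₁ * b₂ - a₂ * b₁)) ∧
    (∀ p : V × V × V, TrivAnn p → Incid p (a₁, b₁, c₁) → NbrPL p (a₂, b₂, c₂) →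
      Nbr p (b₁ * c₂ - b₂ * c₁, c₁ * a₂ - c₂ * a₁, a₁ * b₂ - a₂ * b₁)) := by
  have := hV.isArtinianRing
  exact stmt4_general hL₁ hnn
end

section
/- Two distinct lines of 𝒢(V) are neighboring if and only if they have at least two common points. -/
/-! Over a zero-dimensional Bézout ring `V`, a triple with trivial annihilator is a surjective
linear form on `V³`. Zero-dimensional rings have stable range one, so the kernel of the form `L₁`
is free of rank two, and the common points of `L₁` and `L₂` are the points of the kernel of the
restriction `h : V² → V` of `L₂`. The lines are neighboring iff some `l ≠ 0` annihilates `h`. In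
that case write `h = g • (b, c)` with `x * b + y * c = 1`: both `(c, -b)` and `(c, -b) + l • (x,
y)` are points of `ker h`. Otherwise `h` is surjective and `ker h` is generated by a single
vector, hence contains only one point. Every algebra of dimension at most two over a field is
Artinian and, since a proper ideal has dimension at most one, principal. -/

theorem isPrincipalIdealRing_of_finrank_le_two (K : Type*) {A : Type*} [Field K] [CommRing A]
    [Algebra K A] [Module.Finite K A] (h : Module.finrank K A ≤ 2) : IsPrincipalIdealRing A := by
  refine ⟨fun I ↦ ?_⟩
  rcases eq_or_ne I ⊤ with rfl | hI
  · infer_instance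
  have hlt : Module.finrank K (I.restrictScalars K) < Module.finrank K A :=
    Submodule.finrank_lt (by simpa using hI)
  obtain ⟨m, hm⟩ := (Submodule.finrank_le_one_iff_isPrincipal (I.restrictScalars K)).1 (by omega)
  refine ⟨m, ?_⟩
  rw [← Submodule.span_span_of_tower K A, ← hm, Submodule.coe_restrictScalars, Submodule.span_eq]

section ZeroDimensional

variable {R : Type*} [CommRing R] [Ring.KrullDimLE 0 R]

theorem isUnit_of_mem_nonZeroDivisors_of_krullDimLE_zero {a : R} (ha : a ∈ nonZeroDivisors R) :
    IsUnit a := by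
  by_contra hu
  obtain ⟨m, hm, ham⟩ := exists_max_ideal_of_mem_nonunits hu
  have hmin : m ∈ minimalPrimes R := Ideal.mem_minimalPrimes_iff_isPrime.2 hm.isPrime
  exact Set.disjoint_left.1 (Ideal.disjoint_nonZeroDivisors_of_mem_minimalPrimes hmin) ham ha

theorem isClopen_basicOpen_of_krullDimLE_zero (a : R) :
    IsClopen (PrimeSpectrum.basicOpen a : Set (PrimeSpectrum R)) := by
  refine ⟨?_, (PrimeSpectrum.basicOpen a).isOpen⟩
  rw [← PrimeSpectrum.localization_away_comap_range (Localization.Away a) a]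
  refine PrimeSpectrum.isClosed_range_of_stableUnderSpecialization _ fun p q hpq hp ↦ ?_
  have hle : p ≤ q := (PrimeSpectrum.le_iff_specializes p q).2 hpq
  have hp_max : p.asIdeal.IsMaximal := p.isPrime.isMaximal'
  rwa [← PrimeSpectrum.ext (hp_max.eq_of_le q.isPrime.ne_top hle)]

theorem exists_isUnit_add_mul_of_isCoprime {a b : R} (h : IsCoprime a b) :
    ∃ t : R, IsUnit (a + t * b) := by
  obtain ⟨e, he, hae⟩ := PrimeSpectrum.exists_idempotent_basicOpen_eq_of_isClopen
    (isClopen_basicOpen_of_krullDimLE_zero a)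
  refine ⟨1 - e, ?_⟩
  by_contra hu
  obtain ⟨m, hm, hmem⟩ := exists_max_ideal_of_mem_nonunits hu
  have hae_mem : a ∈ m ↔ e ∈ m := by
    simpa using! not_congr (Set.ext_iff.1 hae ⟨m, hm.isPrime⟩)
  by_cases ham : a ∈ m
  · have hsub : 1 - e ∉ m := fun h1 ↦ hm.ne_top <| m.eq_top_iff_one.2 <| by
      simpa using m.add_mem h1 (hae_mem.1 ham)
    have hbm : b ∈ m := (hm.isPrime.mem_or_mem ((m.add_mem_iff_right ham).1 hmem)).resolve_left hsub
    exact hm.isPrime.notMem_of_isCoprime_of_mem h ham hbm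
  · have hsub : 1 - e ∈ m := (hm.isPrime.mem_or_mem (show e * (1 - e) ∈ m by
      simp [he.mul_one_sub_self])).resolve_left (hae_mem.not.1 ham)
    exact ham ((m.add_mem_iff_left (m.mul_mem_right b hsub)).1 hmem)

theorem exists_eq_mul_isCoprime [IsBezout R] (a b : R) :
    ∃ g a' b' : R, a = g * a' ∧ b = g * b' ∧ IsCoprime a' b' := by
  obtain ⟨x, y, hg⟩ := IsBezout.gcd_eq_sum a b
  obtain ⟨α, hα⟩ := IsBezout.gcd_dvd_left a b
  obtain ⟨β, hβ⟩ := IsBezout.gcd_dvd_right a b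
  set g := IsBezout.gcd a b
  -- `e` annihilates the gcd, so multiples of `e` may be added to the cofactors.
  obtain ⟨e, he⟩ : ∃ e, e = 1 - (x * α + y * β) := ⟨_, rfl⟩
  have hge : g * e = 0 := by
    linear_combination g * he - hg + x * hα + y * hβ
  obtain ⟨t, ht⟩ := exists_isUnit_add_mul_of_isCoprime (a := α) (b := y * β + e)
    ⟨x, 1, by linear_combination he⟩
  obtain ⟨w, hw⟩ := ht.exists_left_inv
  exact ⟨g, α + t * e, β, by linear_combination hα - t * hge, hβ, w, w * t * y,
    by linear_combination hw⟩

end ZeroDimensional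

section Torsion

variable {R M N : Type*} [CommRing R] [AddCommGroup M] [Module R M] [AddCommGroup N] [Module R N]

theorem torsionOf_eq_bot_iff {x : M} :
    Ideal.torsionOf R M x = ⊥ ↔ ∀ c : R, c • x = 0 → c = 0 :=
  Submodule.eq_bot_iff _

theorem torsionOf_map_of_injective {φ : M →ₗ[R] N} (hφ : Function.Injective φ) (x : M) :
    Ideal.torsionOf R N (φ x) = Ideal.torsionOf R M x := by
  ext c
  simp only [Ideal.mem_torsionOf_iff, ← map_smul, map_eq_zero_iff φ hφ]

theorem torsionOf_eq_bot_of_dual_apply_eq_one {x : M} (f : Module.Dual R M) (hfx : f x = 1) :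
    Ideal.torsionOf R M x = ⊥ := by
  refine torsionOf_eq_bot_iff.2 fun c hc ↦ ?_
  simpa [hfx] using congrArg f hc

variable [Ring.KrullDimLE 0 R]

theorem isUnit_of_torsionOf_smul_eq_bot {c : R} {x : M} (h : Ideal.torsionOf R M (c • x) = ⊥) :
    IsUnit c := by
  refine isUnit_of_mem_nonZeroDivisors_of_krullDimLE_zero <|
    mem_nonZeroDivisors_iff_right.2 fun d hd ↦ ?_
  exact torsionOf_eq_bot_iff.1 h d (by rw [smul_smul, hd, zero_smul])

theorem dual_surjective_of_torsionOf_eq_bot [IsBezout R] [Module.Finite R M]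
    {f : Module.Dual R M} (hf : Ideal.torsionOf R (Module.Dual R M) f = ⊥) :
    Function.Surjective f := by
  have hFG : (LinearMap.range f).FG := LinearMap.range_eq_map f ▸ Module.Finite.fg_top.map f
  obtain ⟨g, hg⟩ := IsBezout.isPrincipal_of_FG (LinearMap.range f) hFG
  have hg_reg : g ∈ nonZeroDivisors R := by
    refine mem_nonZeroDivisors_iff_right.2 fun c hc ↦ torsionOf_eq_bot_iff.1 hf c ?_
    refine LinearMap.ext fun x ↦ ?_
    obtain ⟨d, hd⟩ := Submodule.mem_span_singleton.1 (hg ▸ LinearMap.mem_range_self f x)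
    rw [LinearMap.smul_apply, ← hd, smul_comm, smul_eq_mul c g, hc, smul_zero, LinearMap.zero_apply]
  rw [← LinearMap.range_eq_top, hg]
  exact Ideal.span_singleton_eq_top.2 (isUnit_of_mem_nonZeroDivisors_of_krullDimLE_zero hg_reg)

theorem nonempty_linearEquiv_ker_of_surjective {f : R × N →ₗ[R] R} (hf : Function.Surjective f) :
    Nonempty (LinearMap.ker f ≃ₗ[R] N) := by
  obtain ⟨⟨x, n⟩, hxn⟩ := hf 1
  have hf_apply (y : R) (w : N) : f (y, w) = y * f (1, 0) + f (0, w) := by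
    rw [← smul_eq_mul, ← map_smul, ← map_add]
    simp
  obtain ⟨t, ht⟩ := exists_isUnit_add_mul_of_isCoprime (a := f (1, 0)) (b := f (0, n))
    ⟨x, 1, by rw [one_mul, ← hf_apply, hxn]⟩
  have ht_apply : f (1, t • n) = f (1, 0) + t * f (0, n) := by
    rw [hf_apply, one_mul, ← smul_eq_mul t, ← map_smul, Prod.smul_mk, smul_zero]
  rw [← ht_apply] at ht
  -- `(1, t • n)` spans a common complement of `ker f` and `0 × N`; project along it.
  let π : LinearMap.ker f →ₗ[R] N :=
    (LinearMap.snd R R N - (LinearMap.fst R R N).smulRight (t • n)) ∘ₗ (LinearMap.ker f).subtype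
  refine ⟨LinearEquiv.ofBijective π ⟨(injective_iff_map_eq_zero π).2 ?_, fun w ↦ ?_⟩⟩
  · rintro ⟨⟨y, w⟩, hyw⟩ hπ
    have hw : w = y • t • n := sub_eq_zero.1 hπ
    have hy : y * f (1, t • n) = 0 := by
      rw [← smul_eq_mul, ← map_smul, Prod.smul_mk, smul_eq_mul, mul_one, ← hw]
      exact hyw
    have hy0 : y = 0 := (ht.mul_left_eq_zero).1 hy
    simp [hw, hy0]
  · obtain ⟨v, hv⟩ := ht.exists_left_inv
    refine ⟨⟨(0, w) - (f (0, w) * v) • (1, t • n), ?_⟩, ?_⟩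
    · simp [mul_assoc, hv, -Prod.smul_mk]
    · simp [π]

end Torsion

section TwoPoints

variable {R M N : Type*} [CommRing R] [AddCommGroup M] [Module R M] [AddCommGroup N] [Module R N]

/-- The submodule `S` contains two distinct points of the projective geometry of `M`: vectors with
trivial annihilator which are not unit multiples of one another. -/
def HasTwoPoints (S : Submodule R M) : Prop :=
  ∃ p ∈ S, ∃ q ∈ S, Ideal.torsionOf R M p = ⊥ ∧ Ideal.torsionOf R M q = ⊥ ∧
    q ∉ MulAction.orbit Rˣ p

theorem hasTwoPoints_map_iff {φ : M →ₗ[R] N} (hφ : Function.Injective φ) {S : Submodule R M} :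
    HasTwoPoints (S.map φ) ↔ HasTwoPoints S := by
  have horbit (p q : M) : φ q ∈ MulAction.orbit Rˣ (φ p) ↔ q ∈ MulAction.orbit Rˣ p := by
    simp only [MulAction.mem_orbit_iff, Units.smul_def, ← map_smul, hφ.eq_iff]
  simp only [HasTwoPoints, Submodule.mem_map, exists_exists_and_eq_and,
    torsionOf_map_of_injective hφ, horbit]

theorem torsionOf_domRestrict_ker_ne_bot_iff {f g : Module.Dual R M}
    (hf : Function.Surjective f) :
    Ideal.torsionOf R (Module.Dual R (LinearMap.ker f)) (g.domRestrict (LinearMap.ker f)) ≠ ⊥ ↔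
      ∃ k l : R, (k, l) ≠ 0 ∧ k • f = l • g := by
  obtain ⟨m, hm⟩ := hf 1
  simp only [ne_eq, torsionOf_eq_bot_iff, not_forall, exists_prop]
  constructor
  · rintro ⟨l, hl, hl0⟩
    refine ⟨l * g m, l, fun h ↦ hl0 (congrArg Prod.snd h), LinearMap.ext fun x ↦ ?_⟩
    have hx : x - f x • m ∈ LinearMap.ker f := by simp [hm]
    have hlx : l * g (x - f x • m) = 0 := LinearMap.congr_fun hl ⟨_, hx⟩
    rw [map_sub, map_smul, smul_eq_mul] at hlx
    simp only [LinearMap.smul_apply, smul_eq_mul]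
    linear_combination -hlx
  · rintro ⟨k, l, hkl, h⟩
    refine ⟨l, LinearMap.ext fun x ↦ ?_, fun hl0 ↦ hkl ?_⟩
    · have hx : f x = 0 := x.2
      simpa [hx] using (LinearMap.congr_fun h x).symm
    · have hk0 : k = 0 := by simpa [hl0, hm] using LinearMap.congr_fun h m
      rw [hk0, hl0, Prod.mk_zero_zero]

theorem dual_apply_eq_mul_add_mul (h : Module.Dual R (R × R)) (x y : R) :
    h (x, y) = x * h (1, 0) + y * h (0, 1) := by
  rw [← smul_eq_mul, ← smul_eq_mul, ← map_smul, ← map_smul, ← map_add]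
  simp

variable [Ring.KrullDimLE 0 R]

theorem not_hasTwoPoints_ker_of_surjective {h : Module.Dual R (R × R)}
    (hh : Function.Surjective h) : ¬ HasTwoPoints (LinearMap.ker h) := by
  obtain ⟨⟨x, y⟩, hxy⟩ := hh 1
  rw [dual_apply_eq_mul_add_mul] at hxy
  set w : R × R := (-h (0, 1), h (1, 0))
  have mem_orbit (p : R × R) (hp : p ∈ LinearMap.ker h)
      (hp_tors : Ideal.torsionOf R (R × R) p = ⊥) : p ∈ MulAction.orbit Rˣ w := by
    have hp_eq : p = (x * p.2 - y * p.1) • w := by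
      have hp0 : p.1 * h (1, 0) + p.2 * h (0, 1) = 0 := by
        rw [← dual_apply_eq_mul_add_mul]
        exact hp
      refine Prod.ext ?_ ?_ <;> simp only [w, Prod.smul_fst, Prod.smul_snd, smul_eq_mul]
      · linear_combination x * hp0 - p.1 * hxy
      · linear_combination y * hp0 - p.2 * hxy
    rw [hp_eq] at hp_tors
    exact ⟨(isUnit_of_torsionOf_smul_eq_bot hp_tors).unit, hp_eq.symm⟩
  rintro ⟨p, hp, q, hq, hp_tors, hq_tors, hpq⟩
  rw [← MulAction.orbit_eq_iff.2 (mem_orbit p hp hp_tors)] at mem_orbit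
  exact hpq (mem_orbit q hq hq_tors)

variable [IsBezout R]

theorem hasTwoPoints_ker_of_torsionOf_ne_bot {h : Module.Dual R (R × R)}
    (hh : Ideal.torsionOf R (Module.Dual R (R × R)) h ≠ ⊥) :
    HasTwoPoints (LinearMap.ker h) := by
  obtain ⟨l, hl, hl0⟩ := (Submodule.ne_bot_iff _).1 hh
  obtain ⟨g, b, c, hb, hc, x, y, hxy⟩ := exists_eq_mul_isCoprime (h (1, 0)) (h (0, 1))
  -- `p` and `r` form a basis of `R²`, `h p = 0` and `l • h = 0`, so `p` and `p + l • r` both work.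
  let p : R × R := (c, -b)
  let r : R × R := (x, y)
  let δ : Module.Dual R (R × R) := y • LinearMap.fst R R R - x • LinearMap.snd R R R
  have hδp : δ p = 1 := by
    change y * c - x * -b = 1
    linear_combination hxy
  have hδq : δ (p + l • r) = 1 := by
    change y * (c + l * x) - x * (-b + l * y) = 1
    linear_combination hxy
  have hhp : h p = 0 := by rw [dual_apply_eq_mul_add_mul]; linear_combination c * hb - b * hc
  have hhr : l * h r = 0 := LinearMap.congr_fun hl r
  refine ⟨p, hhp, p + l • r, ?_, torsionOf_eq_bot_of_dual_apply_eq_one δ hδp,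
    torsionOf_eq_bot_of_dual_apply_eq_one δ hδq, ?_⟩
  · rw [LinearMap.mem_ker, map_add, hhp, map_smul, smul_eq_mul, hhr, zero_add]
  · rintro ⟨u, hu : (u : R) • p = p + l • r⟩
    have hu1 : (u : R) = 1 := by simpa [hδp, hδq] using congrArg δ hu
    have hlr : l • r = 0 := by simpa [hu1] using hu
    obtain ⟨hlx, hly⟩ : l * x = 0 ∧ l * y = 0 := Prod.ext_iff.1 hlr
    exact hl0 (by linear_combination b * hlx + c * hly - l * hxy)

theorem hasTwoPoints_ker_iff (e : M ≃ₗ[R] R × R) (h : Module.Dual R M) :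
    HasTwoPoints (LinearMap.ker h) ↔ Ideal.torsionOf R (Module.Dual R M) h ≠ ⊥ := by
  have hker : LinearMap.ker h = (LinearMap.ker (h ∘ₗ e.symm)).map (e.symm : R × R →ₗ[R] M) := by
    rw [LinearMap.ker_comp, Submodule.map_comap_eq_of_surjective e.symm.surjective]
  rw [hker, hasTwoPoints_map_iff e.symm.injective,
    ← torsionOf_map_of_injective (LinearMap.dualMap_injective_of_surjective e.symm.surjective) h]
  refine ⟨fun h2 htors ↦ ?_, hasTwoPoints_ker_of_torsionOf_ne_bot⟩
  exact not_hasTwoPoints_ker_of_surjective (dual_surjective_of_torsionOf_eq_bot htors) h2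

theorem hasTwoPoints_ker_inf_ker_iff {f : Module.Dual R (R × R × R)}
    (hf : Ideal.torsionOf R (Module.Dual R (R × R × R)) f = ⊥) (g : Module.Dual R (R × R × R)) :
    HasTwoPoints (LinearMap.ker f ⊓ LinearMap.ker g) ↔
      ∃ k l : R, (k, l) ≠ 0 ∧ k • f = l • g := by
  have hf_surj : Function.Surjective f := dual_surjective_of_torsionOf_eq_bot hf
  obtain ⟨e⟩ := nonempty_linearEquiv_ker_of_surjective hf_surj
  rw [← Submodule.map_comap_subtype, ← LinearMap.ker_domRestrict,
    hasTwoPoints_map_iff (LinearMap.ker f).injective_subtype,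
    hasTwoPoints_ker_iff e, torsionOf_domRestrict_ker_ne_bot_iff hf_surj]

end TwoPoints

section LineForm

variable {R : Type*} [CommRing R]

/-- The linear form `(x, y, z) ↦ ax + by + cz` with coefficient triple `L = (a, b, c)`. Its kernel
consists of the triples incident with the line `L`. -/
def lineForm : (R × R × R) →ₗ[R] Module.Dual R (R × R × R) :=
  LinearMap.mk₂ R (fun L p ↦ L.1 * p.1 + L.2.1 * p.2.1 + L.2.2 * p.2.2)
    (fun _ _ _ ↦ by simp only [Prod.fst_add, Prod.snd_add]; ring)
    (fun _ _ _ ↦ by simp only [Prod.smul_fst, Prod.smul_snd, smul_eq_mul]; ring)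
    (fun _ _ _ ↦ by simp only [Prod.fst_add, Prod.snd_add]; ring)
    (fun _ _ _ ↦ by simp only [Prod.smul_fst, Prod.smul_snd, smul_eq_mul]; ring)

theorem lineForm_injective : Function.Injective (lineForm (R := R)) := by
  refine (injective_iff_map_eq_zero lineForm).2 fun ⟨a, b, c⟩ h ↦ ?_
  have ha : lineForm (a, b, c) (1, 0, 0) = a := by simp [lineForm]
  have hb : lineForm (a, b, c) (0, 1, 0) = b := by simp [lineForm]
  have hc : lineForm (a, b, c) (0, 0, 1) = c := by simp [lineForm]
  simp_all

end LineForm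

section Geometry

variable {V : Type} [CommRing V]

theorem incid_iff_mem_ker_lineForm {p L : V × V × V} :
    Incid p L ↔ p ∈ LinearMap.ker (lineForm L) :=
  Iff.rfl

theorem trivAnn_iff_torsionOf_eq_bot_s7 {p : V × V × V} :
    TrivAnn p ↔ Ideal.torsionOf V (V × V × V) p = ⊥ := by
  simp only [torsionOf_eq_bot_iff, TrivAnn, Prod.ext_iff, Prod.smul_fst, Prod.smul_snd, smul_eq_mul,
    Prod.fst_zero, Prod.snd_zero, and_imp]

theorem sameCls_iff_mem_orbit {p q : V × V × V} : SameCls p q ↔ q ∈ MulAction.orbit Vˣ p :=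
  ⟨fun ⟨_, hu, h⟩ ↦ ⟨hu.unit, h⟩, fun ⟨u, hu⟩ ↦ ⟨u, u.isUnit, hu⟩⟩

theorem nbr_iff_exists_smul_lineForm_eq {L₁ L₂ : V × V × V} :
    Nbr L₁ L₂ ↔ ∃ k l : V, (k, l) ≠ 0 ∧ k • lineForm L₁ = l • lineForm L₂ := by
  simp only [← map_smul, lineForm_injective.eq_iff]
  rfl

end Geometry

theorem stmt7_general (V : Type) [CommRing V] [Ring.KrullDimLE 0 V] [IsBezout V]
    (L₁ L₂ : V × V × V) (hL₁ : TrivAnn L₁) :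
    Nbr L₁ L₂ ↔ ∃ P Q : V × V × V, TrivAnn P ∧ TrivAnn Q ∧ ¬ SameCls P Q ∧
      Incid P L₁ ∧ Incid P L₂ ∧ Incid Q L₁ ∧ Incid Q L₂ := by
  have hL₁_form : Ideal.torsionOf V _ (lineForm L₁) = ⊥ := by
    rw [torsionOf_map_of_injective lineForm_injective, ← trivAnn_iff_torsionOf_eq_bot_s7]
    exact hL₁
  rw [nbr_iff_exists_smul_lineForm_eq, ← hasTwoPoints_ker_inf_ker_iff hL₁_form]
  simp only [HasTwoPoints, trivAnn_iff_torsionOf_eq_bot_s7, sameCls_iff_mem_orbit,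
    incid_iff_mem_ker_lineForm, Submodule.mem_inf]
  constructor
  · rintro ⟨P, ⟨hP₁, hP₂⟩, Q, ⟨hQ₁, hQ₂⟩, hP, hQ, hPQ⟩
    exact ⟨P, Q, hP, hQ, hPQ, hP₁, hP₂, hQ₁, hQ₂⟩
  · rintro ⟨P, Q, hP, hQ, hPQ, hP₁, hP₂, hQ₁, hQ₂⟩
    exact ⟨P, ⟨hP₁, hP₂⟩, Q, ⟨hQ₁, hQ₂⟩, hP, hQ, hPQ⟩

/-- Two distinct lines of `𝒢(V)` are neighboring iff they have at least two
common points. -/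
theorem stmt7 (K : Type) [Field K] (V : Type) [CommRing V] [Algebra K V] (r s : V)
    (hV : GoodAlg K V r s)
    (L₁ L₂ : V × V × V) (hL₁ : TrivAnn L₁) (hL₂ : TrivAnn L₂)
    (hne : ¬ SameCls L₁ L₂) :
    Nbr L₁ L₂ ↔ ∃ P Q : V × V × V, TrivAnn P ∧ TrivAnn Q ∧ ¬ SameCls P Q ∧
      Incid P L₁ ∧ Incid P L₂ ∧ Incid Q L₁ ∧ Incid Q L₂ := by
  have : Module.Finite K V := Module.finite_of_finrank_pos (by rw [hV.1]; exact two_pos)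
  have : IsArtinianRing V := IsArtinianRing.of_finite K V
  have : IsPrincipalIdealRing V := isPrincipalIdealRing_of_finrank_le_two K hV.1.le
  exact stmt7_general V L₁ L₂ hL₁
end

section
/- Let Pᵢ = V*(xᵢ,yᵢ,zᵢ), i = 1,2,3,4, be four points of 𝒢(V). Then (P₁,P₂,P₃,P₄) is a proper ordered quadrangle if and only if the determinant D of the 3×3 matrix over V with rows (x₁,y₁,z₁), (x₂,y₂,z₂), (x₃,y₃,z₃) is a unit of V and there exist units a₁,a₂,a₃ ∈ V* with (x₄,y₄,z₄) = a₁(x₁,y₁,z₁) + a₂(x₂,y₂,z₂) + a₃(x₃,y₃,z₃). -/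
/-- A proper ordered triangle: three pairwise non-neighboring points such that the three
(unique) joining lines are pairwise non-neighboring. -/
def ProperTri {V : Type} [CommRing V] (P₁ P₂ P₃ : V × V × V) : Prop :=
  ¬ Nbr P₁ P₂ ∧ ¬ Nbr P₂ P₃ ∧ ¬ Nbr P₃ P₁ ∧
  ∃ L₁₂ L₂₃ L₃₁ : V × V × V,
    TrivAnn L₁₂ ∧ TrivAnn L₂₃ ∧ TrivAnn L₃₁ ∧
    Incid P₁ L₁₂ ∧ Incid P₂ L₁₂ ∧ Incid P₂ L₂₃ ∧ Incid P₃ L₂₃ ∧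
    Incid P₃ L₃₁ ∧ Incid P₁ L₃₁ ∧
    ¬ Nbr L₁₂ L₂₃ ∧ ¬ Nbr L₂₃ L₃₁ ∧ ¬ Nbr L₃₁ L₁₂

/-- A proper ordered quadrangle: every ordered subtriple is a proper ordered triangle. -/
def ProperQuad {V : Type} [CommRing V] (P₁ P₂ P₃ P₄ : V × V × V) : Prop :=
  ∀ i j k : Fin 4, i ≠ j → i ≠ k → j ≠ k →
    ProperTri (![P₁, P₂, P₃, P₄] i) (![P₁, P₂, P₃, P₄] j) (![P₁, P₂, P₃, P₄] k)

/-! Over any commutative ring, two points are non-neighboring iff their coordinate vectors are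
linearly independent, iff the cross product of these vectors has trivial annihilator. For
vectors `p`, `q`, `r` the identity `(p × q) × (q × r) = det (p, q, r) q` then shows that a
triple is a proper triangle iff its determinant is a non-zero-divisor: a line through
non-neighboring points `p`, `q` need not be a multiple of `p × q`, but it is parallel to it,
which is enough to compare annihilators. If non-zero-divisors are units, the four determinants
of a quadrangle are units, and by Cramer's rule three of them are the coefficients of `P₄` times
the determinant of `P₁, P₂, P₃`. -/

section

open Matrix nonZeroDivisors

section TrivialAnnihilator

/-- The element `x` of an `R`-module is annihilated by no nonzero scalar; for vectors of
coordinates this is the condition `TrivAnn` defining points and lines. -/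
def HasTrivAnn (R : Type*) {M : Type*} [Zero R] [Zero M] [SMul R M] (x : M) : Prop :=
  ∀ a : R, a • x = 0 → a = 0

variable {R : Type*} [CommRing R]

theorem hasTrivAnn_smul_iff {M : Type*} [AddCommGroup M] [Module R M] {a : R} {x : M} :
    HasTrivAnn R (a • x) ↔ a ∈ R⁰ ∧ HasTrivAnn R x := by
  simp only [HasTrivAnn, smul_smul, mem_nonZeroDivisors_iff_right]
  refine ⟨fun h ↦ ⟨fun b hb ↦ h b (by rw [hb, zero_smul]), fun b hb ↦ h b ?_⟩,
    fun ⟨ha, hx⟩ b hb ↦ ha b (hx _ hb)⟩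
  rw [mul_comm, mul_smul, hb, smul_zero]

theorem hasTrivAnn_of_dotProduct_mem_nonZeroDivisors {ι : Type*} [Fintype ι] {v w : ι → R}
    (h : v ⬝ᵥ w ∈ R⁰) : HasTrivAnn R w := by
  intro a ha
  apply (mem_nonZeroDivisors_iff_right.mp h) a
  rw [← smul_eq_mul, ← dotProduct_smul, ha, dotProduct_zero]

end TrivialAnnihilator

section CrossProduct

variable {R : Type*} [CommRing R] {v w p q r l m : Fin 3 → R}

theorem smul_eq_smul_of_cross_eq_zero (h : v ⨯₃ w = 0) (i : Fin 3) : v i • w = w i • v := by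
  simp only [cross_apply, cons_eq_zero_iff, sub_eq_zero] at h
  obtain ⟨h₁₂, h₂₀, h₀₁, -⟩ := h
  ext j
  fin_cases i <;> fin_cases j <;> grind [Pi.smul_apply, smul_eq_mul]

theorem hasTrivAnn_cross_iff : HasTrivAnn R (v ⨯₃ w) ↔ LinearIndependent R ![v, w] := by
  rw [LinearIndependent.pair_iff]
  constructor
  · intro h a b hab
    have hv : v ⨯₃ (a • v + b • w) = b • v ⨯₃ w := by simp
    have hw : (a • v + b • w) ⨯₃ w = a • v ⨯₃ w := by simp
    exact ⟨h a (by simp [← hw, hab]), h b (by simp [← hv, hab])⟩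
  · intro h a ha
    have hparallel : (a • v) ⨯₃ w = 0 := by simpa using ha
    have hw : a • w = 0 := by
      ext i
      have hi : (a * v i) • w = w i • a • v := smul_eq_smul_of_cross_eq_zero hparallel i
      have hcomb : (w i * a) • v + (-(a * v i)) • w = 0 := by
        rw [neg_smul, hi, mul_smul, add_neg_cancel]
      rw [Pi.smul_apply, smul_eq_mul, mul_comm]
      exact (h _ _ hcomb).1
    exact (h 0 a (by simpa using hw)).2

theorem cross_cross_cross_eq_smul (p q r : Fin 3 → R) :
    p ⨯₃ q ⨯₃ (q ⨯₃ r) = (p ⬝ᵥ q ⨯₃ r) • q := by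
  rw [cross_cross_eq_smul_sub_smul, dot_self_cross, zero_smul, sub_zero]

theorem cross_cross_eq_zero_of_dotProduct_eq_zero (hp : l ⬝ᵥ p = 0) (hq : l ⬝ᵥ q = 0) :
    p ⨯₃ q ⨯₃ l = 0 := by
  rw [cross_cross_eq_smul_sub_smul, dotProduct_comm p, dotProduct_comm q, hp, hq, zero_smul,
    zero_smul, sub_zero]

theorem HasTrivAnn.cross_of_parallel (hv : HasTrivAnn R v) (hw : HasTrivAnn R w)
    (hlm : HasTrivAnn R (l ⨯₃ m)) (hvl : v ⨯₃ l = 0) (hwm : w ⨯₃ m = 0) :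
    HasTrivAnn R (v ⨯₃ w) := by
  intro a ha
  have hcross (i j : Fin 3) : (v i * w j) • l ⨯₃ m = (l i * m j) • v ⨯₃ w := by
    calc (v i * w j) • l ⨯₃ m = (v i • l) ⨯₃ (w j • m) := by simp [mul_smul, smul_comm (v i)]
      _ = (l i • v) ⨯₃ (m j • w) := by
        rw [smul_eq_smul_of_cross_eq_zero hvl, smul_eq_smul_of_cross_eq_zero hwm]
      _ = (l i * m j) • v ⨯₃ w := by simp [mul_smul, smul_comm (l i)]
  have hentries (i j : Fin 3) : a * v i * w j = 0 := by
    apply hlm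
    rw [mul_assoc, mul_smul, hcross, smul_comm, ha, smul_zero]
  have hcoord (i : Fin 3) : a * v i = 0 := hw _ (funext (hentries i))
  exact hv a (funext hcoord)

theorem tripleProduct_mem_nonZeroDivisors_of_lines
    (hpq : LinearIndependent R ![p, q]) (hqr : LinearIndependent R ![q, r])
    (hlm : LinearIndependent R ![l, m]) (hlp : l ⬝ᵥ p = 0) (hlq : l ⬝ᵥ q = 0)
    (hmq : m ⬝ᵥ q = 0) (hmr : m ⬝ᵥ r = 0) : p ⬝ᵥ q ⨯₃ r ∈ R⁰ := by
  rw [← hasTrivAnn_cross_iff] at hpq hqr hlm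
  have h := hpq.cross_of_parallel hqr hlm (cross_cross_eq_zero_of_dotProduct_eq_zero hlp hlq)
    (cross_cross_eq_zero_of_dotProduct_eq_zero hmq hmr)
  rw [cross_cross_cross_eq_smul, hasTrivAnn_smul_iff] at h
  exact h.1

theorem hasTrivAnn_cross_of_tripleProduct (h : p ⬝ᵥ q ⨯₃ r ∈ R⁰) : HasTrivAnn R (p ⨯₃ q) := by
  rw [← triple_product_permutation] at h
  exact hasTrivAnn_of_dotProduct_mem_nonZeroDivisors h

theorem linearIndependent_of_tripleProduct (h : p ⬝ᵥ q ⨯₃ r ∈ R⁰) :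
    LinearIndependent R ![p, q] :=
  hasTrivAnn_cross_iff.mp (hasTrivAnn_cross_of_tripleProduct h)

theorem linearIndependent_cross_of_tripleProduct (h : p ⬝ᵥ q ⨯₃ r ∈ R⁰) :
    LinearIndependent R ![p ⨯₃ q, q ⨯₃ r] := by
  rw [← hasTrivAnn_cross_iff, cross_cross_cross_eq_smul, hasTrivAnn_smul_iff]
  refine ⟨h, ?_⟩
  rw [triple_product_permutation, dotProduct_comm] at h
  exact hasTrivAnn_of_dotProduct_mem_nonZeroDivisors h

end CrossProduct

section Cramer

theorem forall_isUnit_det_updateRow_iff {n R : Type*} [Fintype n] [DecidableEq n] [CommRing R]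
    {A : Matrix n n R} (hA : IsUnit A.det) (v : n → R) :
    (∀ i, IsUnit (A.updateRow i v).det) ↔
      ∃ a : n → R, (∀ i, IsUnit (a i)) ∧ v = ∑ i, a i • A i := by
  have hdet (a : n → R) (i : n) :
      IsUnit (A.updateRow i (∑ j, a j • A j)).det ↔ IsUnit (a i) := by
    rw [det_updateRow_sum, smul_eq_mul, IsUnit.mul_iff, and_iff_left hA]
  constructor
  · intro h
    obtain ⟨a, rfl⟩ := vecMul_surjective_iff_isUnit.mpr ((isUnit_iff_isUnit_det A).mpr hA) v
    simp only [vecMul_eq_sum, hdet] at h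
    exact ⟨a, h, vecMul_eq_sum a A⟩
  · rintro ⟨a, ha, rfl⟩ i
    exact (hdet a i).mpr (ha i)

end Cramer

section Geometry

/-- The coordinates of a point or line as a vector indexed by `Fin 3`, the form in which
dot products, cross products and determinants apply to it. -/
def coords {V : Type} (p : V × V × V) : Fin 3 → V := ![p.1, p.2.1, p.2.2]

theorem coords_surjective {V : Type} : Function.Surjective (coords (V := V)) :=
  fun v ↦ ⟨(v 0, v 1, v 2), FinVec.etaExpand_eq v⟩

variable {V : Type} [CommRing V] {p q r L P₁ P₂ P₃ P₄ : V × V × V}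

theorem trivAnn_iff : TrivAnn p ↔ HasTrivAnn V (coords p) := by
  simp [TrivAnn, HasTrivAnn, coords]

theorem incid_iff : Incid p L ↔ coords L ⬝ᵥ coords p = 0 := by
  simp [Incid, coords, add_assoc]

theorem not_nbr_iff : ¬ Nbr p q ↔ LinearIndependent V ![coords p, coords q] := by
  have hsmul (k l : V) : (k * p.1, k * p.2.1, k * p.2.2) = (l * q.1, l * q.2.1, l * q.2.2) ↔
      k • coords p + -l • coords q = 0 := by
    simp [coords, ← sub_eq_add_neg, sub_eq_zero]
  rw [LinearIndependent.pair_iff]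
  constructor
  · intro h k l hkl
    by_contra hne
    exact h ⟨k, -l, by simpa using hne, (hsmul k (-l)).mpr (by simpa using hkl)⟩
  · rintro h ⟨k, l, hne, hkl⟩
    exact hne (by simpa using h k (-l) ((hsmul k l).mp hkl))

theorem properTri_iff :
    ProperTri p q r ↔ coords p ⬝ᵥ coords q ⨯₃ coords r ∈ V⁰ := by
  constructor
  · rintro ⟨hpq, hqr, -, l, m, -, -, -, -, hpl, hql, hqm, hrm, -, -, hlm, -, -⟩
    rw [not_nbr_iff] at hpq hqr hlm
    rw [incid_iff] at hpl hql hqm hrm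
    exact tripleProduct_mem_nonZeroDivisors_of_lines hpq hqr hlm hpl hql hqm hrm
  · intro hpqr
    have hqrp : coords q ⬝ᵥ coords r ⨯₃ coords p ∈ V⁰ := by rwa [← triple_product_permutation]
    have hrpq : coords r ⬝ᵥ coords p ⨯₃ coords q ∈ V⁰ := by rwa [← triple_product_permutation]
    obtain ⟨l, hl⟩ := coords_surjective (coords p ⨯₃ coords q)
    obtain ⟨m, hm⟩ := coords_surjective (coords q ⨯₃ coords r)
    obtain ⟨n, hn⟩ := coords_surjective (coords r ⨯₃ coords p)
    simp only [ProperTri, not_nbr_iff, trivAnn_iff, incid_iff]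
    refine ⟨linearIndependent_of_tripleProduct hpqr, linearIndependent_of_tripleProduct hqrp,
      linearIndependent_of_tripleProduct hrpq, l, m, n, ?_⟩
    simp only [hl, hm, hn, dotProduct_comm _ (coords _), dot_self_cross, dot_cross_self, true_and]
    exact ⟨hasTrivAnn_cross_of_tripleProduct hpqr, hasTrivAnn_cross_of_tripleProduct hqrp,
      hasTrivAnn_cross_of_tripleProduct hrpq, linearIndependent_cross_of_tripleProduct hpqr,
      linearIndependent_cross_of_tripleProduct hqrp, linearIndependent_cross_of_tripleProduct hrpq⟩

theorem properTri_rotate : ProperTri q r p ↔ ProperTri p q r := by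
  rw [properTri_iff, properTri_iff, triple_product_permutation (coords p)]

theorem properTri_swap : ProperTri p r q ↔ ProperTri p q r := by
  rw [properTri_iff, properTri_iff, ← cross_anticomm, dotProduct_neg,
    mem_nonZeroDivisors_iff_right, mem_nonZeroDivisors_iff_right]
  simp only [mul_neg, neg_eq_zero]

theorem properQuad_iff :
    ProperQuad P₁ P₂ P₃ P₄ ↔
      ProperTri P₁ P₂ P₃ ∧ ProperTri P₄ P₂ P₃ ∧ ProperTri P₁ P₄ P₃ ∧ ProperTri P₁ P₂ P₄ := by
  simp only [ProperQuad, Fin.forall_fin_succ, ne_eq, cons_val_zero, cons_val_succ,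
    Fin.succ_zero_eq_one, Fin.succ_one_eq_two, Fin.reduceSucc, Fin.reduceEq, Fin.succ_ne_zero,
    zero_ne_one, not_true_eq_false, not_false_eq_true, IsEmpty.forall_iff, forall_const,
    implies_true, true_and, and_true]
  grind [properTri_rotate, properTri_swap]

theorem properTri_iff_isUnit_det [IsFractionRing V V] :
    ProperTri p q r ↔ IsUnit (det ![coords p, coords q, coords r]) := by
  rw [properTri_iff, triple_product_eq_det, IsFractionRing.nonZeroDivisors_eq_isUnit V V,
    IsUnit.mem_submonoid_iff]

theorem properQuad_iff_isUnit_det [IsFractionRing V V] :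
    ProperQuad P₁ P₂ P₃ P₄ ↔
      IsUnit (det ![coords P₁, coords P₂, coords P₃]) ∧
      ∀ i, IsUnit (updateRow ![coords P₁, coords P₂, coords P₃] i (coords P₄)).det := by
  have hrow₀ (a b c d : Fin 3 → V) : updateRow ![a, b, c] 0 d = ![d, b, c] := by
    ext i; fin_cases i <;> rfl
  have hrow₁ (a b c d : Fin 3 → V) : updateRow ![a, b, c] 1 d = ![a, d, c] := by
    ext i; fin_cases i <;> rfl
  have hrow₂ (a b c d : Fin 3 → V) : updateRow ![a, b, c] 2 d = ![a, b, d] := by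
    ext i; fin_cases i <;> rfl
  rw [properQuad_iff]
  simp only [properTri_iff_isUnit_det, Fin.forall_fin_succ, Fin.succ_zero_eq_one,
    Fin.succ_one_eq_two, hrow₀, hrow₁, hrow₂, IsEmpty.forall_iff, and_true]

theorem GoodAlg.isFractionRing {K : Type} [Field K] [Algebra K V] {r s : V}
    (hV : GoodAlg K V r s) : IsFractionRing V V := by
  have : Module.Finite K V := Module.finite_of_finrank_pos (hV.1.symm ▸ two_pos)
  have : IsArtinianRing V := IsArtinianRing.of_finite K V
  exact IsLocalization.of_le_isUnit fun _ ↦ IsArtinianRing.isUnit_of_mem_nonZeroDivisors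

end Geometry

end

theorem stmt10_general (V : Type) [CommRing V] [IsFractionRing V V]
    (x₁ y₁ z₁ x₂ y₂ z₂ x₃ y₃ z₃ x₄ y₄ z₄ : V) :
    ProperQuad (x₁, y₁, z₁) (x₂, y₂, z₂) (x₃, y₃, z₃) (x₄, y₄, z₄) ↔
      IsUnit (Matrix.det !![x₁, y₁, z₁; x₂, y₂, z₂; x₃, y₃, z₃]) ∧
      ∃ a₁ a₂ a₃ : V, IsUnit a₁ ∧ IsUnit a₂ ∧ IsUnit a₃ ∧
        x₄ = a₁ * x₁ + a₂ * x₂ + a₃ * x₃ ∧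
        y₄ = a₁ * y₁ + a₂ * y₂ + a₃ * y₃ ∧
        z₄ = a₁ * z₁ + a₂ * z₂ + a₃ * z₃ := by
  have hrows : !![x₁, y₁, z₁; x₂, y₂, z₂; x₃, y₃, z₃] =
      ![coords (x₁, y₁, z₁), coords (x₂, y₂, z₂), coords (x₃, y₃, z₃)] := rfl
  rw [hrows, properQuad_iff_isUnit_det]
  refine and_congr_right fun hD ↦ ?_
  rw [forall_isUnit_det_updateRow_iff hD]
  simp [Fin.exists_fin_succ_pi, Fin.forall_fin_succ, Fin.sum_univ_three, coords, and_assoc]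

/-- Four points `Pᵢ = V*(xᵢ,yᵢ,zᵢ)` form a proper ordered quadrangle iff
the determinant of the 3×3 matrix with rows `(x₁,y₁,z₁)`, `(x₂,y₂,z₂)`, `(x₃,y₃,z₃)` is a
unit and `(x₄,y₄,z₄)` is a combination of the first three rows with unit coefficients. -/
theorem stmt10 (K : Type) [Field K] (V : Type) [CommRing V] [Algebra K V] (r s : V)
    (hV : GoodAlg K V r s)
    (x₁ y₁ z₁ x₂ y₂ z₂ x₃ y₃ z₃ x₄ y₄ z₄ : V)
    (hP₁ : TrivAnn (x₁, y₁, z₁)) (hP₂ : TrivAnn (x₂, y₂, z₂))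
    (hP₃ : TrivAnn (x₃, y₃, z₃)) (hP₄ : TrivAnn (x₄, y₄, z₄)) :
    ProperQuad (x₁, y₁, z₁) (x₂, y₂, z₂) (x₃, y₃, z₃) (x₄, y₄, z₄) ↔
      IsUnit (Matrix.det !![x₁, y₁, z₁; x₂, y₂, z₂; x₃, y₃, z₃]) ∧
      ∃ a₁ a₂ a₃ : V, IsUnit a₁ ∧ IsUnit a₂ ∧ IsUnit a₃ ∧
        x₄ = a₁ * x₁ + a₂ * x₂ + a₃ * x₃ ∧
        y₄ = a₁ * y₁ + a₂ * y₂ + a₃ * y₃ ∧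
        z₄ = a₁ * z₁ + a₂ * z₂ + a₃ * z₃ := by
  have := hV.isFractionRing
  exact stmt10_general V x₁ y₁ z₁ x₂ y₂ z₂ x₃ y₃ z₃ x₄ y₄ z₄
end
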